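/- arXiv:2111.02615 — 11 statements merged into one kernel-verified Lean document; each statement's English description precedes it below -/
import Mathlib

section
/- Let Γ be a finite connected simple graph with at least 3 vertices, and let g be an automorphism of Γ such that the cyclic group generated by g acts regularly (transitively and freely) on the edge set of Γ. Then either there exists n ≥ 3 such that Γ is isomorphic to the cycle graph C_n, or there exist s, t ≥ 1 with s·t > 1 and Nat.gcd s t = 1 such that Γ is isomorphic to the complete bipartite graph with parts Fin s and Fin t. -/
/-- The cycle graph `C_n` on `ZMod n`: `i` and `j` are adjacent iff `j = i + 1` or `i = j + 1`. -/
def cycGraph (n : ℕ) : SimpleGraph (ZMod n) :=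
  SimpleGraph.fromRel (fun i j => j = i + 1)

theorem aux_period {V : Type} [Fintype V] {Γ : SimpleGraph V} (g : Γ ≃g Γ) (u : V) :
    ∃ n : ℕ, 0 < n ∧ ∀ i j : ℤ, (g ^ i) u = (g ^ j) u ↔ ((i : ZMod n) = (j : ZMod n)) := by
  have hfin : Finite (Γ ≃g Γ) := Finite.of_injective (fun f : Γ ≃g Γ => (f : V → V))
    (fun a b h => by ext x; exact congrFun h x)
  refine ⟨MulAction.period g u,
    MulAction.period_pos_of_orderOf_pos (orderOf_pos g) u, fun i j => ?_⟩
  rw [ZMod.intCast_eq_intCast_iff_dvd_sub, ← MulAction.zpow_smul_eq_iff_period_dvd]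
  change _ ↔ (g ^ (j - i)) u = u
  rw [show j - i = -i + j by ring, zpow_add, RelIso.mul_apply, zpow_neg]
  constructor
  · intro h
    rw [← h]
    exact RelIso.inv_apply_self _ _
  · intro h
    have := congrArg (g ^ i) h
    rw [RelIso.apply_inv_self] at this
    exact this.symm

theorem aux_add {V : Type} {Γ : SimpleGraph V} (g : Γ ≃g Γ) (i j : ℤ) (u : V) :
    (g ^ (i + j)) u = (g ^ i) ((g ^ j) u) := by
  rw [zpow_add, RelIso.mul_apply]

theorem aux_closed {V : Type} {Γ : SimpleGraph V} (hconn : Γ.Connected) (S : V → Prop)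
    (u : V) (hu : S u) (hS : ∀ x y, S x → Γ.Adj x y → S y) (x : V) : S x := by
  obtain ⟨p⟩ := hconn.preconnected u x
  induction p with
  | nil => exact hu
  | cons h p ih => exact ih (hS _ _ hu h)

theorem aux_cycle {V : Type} [Fintype V] (Γ : SimpleGraph V)
    (hconn : Γ.Connected) (hcard : 3 ≤ Fintype.card V) (h : Γ ≃g Γ) (u : V)
    (hadj : Γ.Adj u (h u))
    (hE : ∀ i x, Γ.Adj ((h ^ (i : ℤ)) u) x → x = (h ^ (i + 1)) u ∨ x = (h ^ (i - 1)) u) :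
    ∃ n : ℕ, 3 ≤ n ∧ Nonempty (Γ ≃g cycGraph n) := by
  obtain ⟨n, hn, hp⟩ := aux_period h u
  have : NeZero n := ⟨hn.ne'⟩
  let F : ZMod n → V := fun x => (h ^ (x.cast : ℤ)) u
  have hF : ∀ i : ℤ, F (i : ZMod n) = (h ^ i) u := fun i => by
    simp only [F]; rw [hp]; simp
  have hbij : Function.Bijective F := by
    constructor
    · intro x y hxy
      simpa [F, hp] using hxy
    · refine aux_closed hconn (fun x => ∃ a, F a = x) u ⟨0, by simpa using hF 0⟩ ?_
      rintro x y ⟨a, rfl⟩ hxy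
      rcases hE _ _ hxy with rfl | rfl
      · exact ⟨_, hF _⟩
      · exact ⟨_, hF _⟩
  refine ⟨n, ?_, ⟨RelIso.symm ⟨Equiv.ofBijective F hbij, ?_⟩⟩⟩
  · rw [← Fintype.card_of_bijective hbij, ZMod.card] at hcard
    exact hcard
  · have hstep : ∀ a : ZMod n, Γ.Adj (F a) (F (a + 1)) := by
      intro a
      have h1 : F (a + 1) = (h ^ (a.cast : ℤ)) (h u) := by
        have := hF (a.cast + 1)
        push_cast at this
        rw [this, aux_add, zpow_one]
      rw [h1]
      exact (h ^ (a.cast : ℤ)).map_rel_iff.2 hadj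
    intro a b
    simp only [Equiv.ofBijective_apply, cycGraph, SimpleGraph.fromRel_adj]
    constructor
    · intro hab
      refine ⟨fun e => hab.ne (congrArg F e), ?_⟩
      rcases hE _ _ hab with h1 | h1
      · rw [← hF] at h1
        left; simpa using hbij.1 h1
      · rw [← hF] at h1
        right; have := hbij.1 h1
        push_cast at this
        rw [this]; simp
    · rintro ⟨-, rfl | rfl⟩
      · exact hstep _
      · exact (hstep _).symm

theorem aux_bip {V : Type} [Fintype V] (Γ : SimpleGraph V)
    (hconn : Γ.Connected) (hcard : 3 ≤ Fintype.card V) (g : Γ ≃g Γ) (u v : V)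
    (hadj : Γ.Adj u v) (hne : ∀ i j : ℤ, (g ^ i) u ≠ (g ^ j) v)
    (hE : ∀ x y, Γ.Adj x y → ∃ k : ℤ,
      (x = (g ^ k) u ∧ y = (g ^ k) v) ∨ (x = (g ^ k) v ∧ y = (g ^ k) u)) :
    (∃ s t : ℕ, 1 ≤ s ∧ 1 ≤ t ∧ 1 < s * t ∧ Nat.gcd s t = 1 ∧
      Nonempty (Γ ≃g completeBipartiteGraph (Fin s) (Fin t))) := by
  obtain ⟨s, hs, hps⟩ := aux_period g u
  obtain ⟨t, ht, hpt⟩ := aux_period g v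
  have : NeZero s := ⟨hs.ne'⟩
  have : NeZero t := ⟨ht.ne'⟩
  have hgcd : Nat.gcd s t = 1 := by
    have key := aux_closed hconn
      (fun x => ∃ k : ℤ, ((Nat.gcd s t : ℕ) : ℤ) ∣ k ∧ (x = (g ^ k) u ∨ x = (g ^ k) v)) u
      ⟨0, by simp, Or.inl (by simp)⟩ (by
        rintro x y ⟨k, hk, hx⟩ hxy
        obtain ⟨m, ⟨h1, h2⟩ | ⟨h1, h2⟩⟩ := hE x y hxy
        · refine ⟨m, ?_, Or.inr h2⟩
          rcases hx with hx | hx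
          · rw [hx, hps, ZMod.intCast_eq_intCast_iff_dvd_sub] at h1
            have h3 := (Int.natCast_dvd_natCast.2 (Nat.gcd_dvd_left s t)).trans h1
            simpa using dvd_add h3 hk
          · exact absurd (h1.symm.trans hx) (hne _ _)
        · refine ⟨m, ?_, Or.inl h2⟩
          rcases hx with hx | hx
          · exact absurd (hx.symm.trans h1) (hne _ _)
          · rw [hx, hpt, ZMod.intCast_eq_intCast_iff_dvd_sub] at h1
            have h3 := (Int.natCast_dvd_natCast.2 (Nat.gcd_dvd_right s t)).trans h1
            simpa using dvd_add h3 hk) ((g ^ (1 : ℤ)) u)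
    obtain ⟨k, hk, h1 | h1⟩ := key
    · rw [hps, ZMod.intCast_eq_intCast_iff_dvd_sub] at h1
      have h3 := (Int.natCast_dvd_natCast.2 (Nat.gcd_dvd_left s t)).trans h1
      have h4 := dvd_sub hk h3
      rw [sub_sub_cancel] at h4
      exact Nat.dvd_one.1 (by exact_mod_cast h4)
    · exact absurd h1 (hne _ _)
  let F : Fin s ⊕ Fin t → V := Sum.elim
    (fun i => (g ^ ((ZMod.finEquiv s i).cast : ℤ)) u)
    (fun i => (g ^ ((ZMod.finEquiv t i).cast : ℤ)) v)
  have hFu : ∀ k : ℤ, ∃ a, F (Sum.inl a) = (g ^ k) u := fun k =>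
    ⟨(ZMod.finEquiv s).symm (k : ZMod s), by simp [F, hps]⟩
  have hFv : ∀ k : ℤ, ∃ a, F (Sum.inr a) = (g ^ k) v := fun k =>
    ⟨(ZMod.finEquiv t).symm (k : ZMod t), by simp [F, hpt]⟩
  have hbij : Function.Bijective F := by
    constructor
    · rintro (a | a) (b | b) hab
      · simpa [F, hps] using hab
      · exact absurd hab (hne _ _)
      · exact absurd hab.symm (hne _ _)
      · simpa [F, hpt] using hab
    · refine aux_closed hconn (fun x => ∃ a, F a = x) u ?_ ?_
      · obtain ⟨a, ha⟩ := hFu 0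
        exact ⟨_, by simpa using ha⟩
      rintro x y - hxy
      obtain ⟨m, ⟨h1, h2⟩ | ⟨h1, h2⟩⟩ := hE x y hxy
      · obtain ⟨a, ha⟩ := hFv m
        exact ⟨_, ha.trans h2.symm⟩
      · obtain ⟨a, ha⟩ := hFu m
        exact ⟨_, ha.trans h2.symm⟩
  refine ⟨s, t, hs, ht, ?_, hgcd, ⟨RelIso.symm ⟨Equiv.ofBijective F hbij, ?_⟩⟩⟩
  · rw [← Fintype.card_of_bijective hbij, Fintype.card_sum, Fintype.card_fin,
      Fintype.card_fin] at hcard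
    have : 1 < s ∨ 1 < t := by omega
    rcases this with h | h
    · nlinarith
    · nlinarith
  · have huu : ∀ i j : ℤ, ¬ Γ.Adj ((g ^ i) u) ((g ^ j) u) := by
      intro i j h
      obtain ⟨m, ⟨h1, h2⟩ | ⟨h1, h2⟩⟩ := hE _ _ h
      · exact hne _ _ h2
      · exact hne _ _ h1
    have hvv : ∀ i j : ℤ, ¬ Γ.Adj ((g ^ i) v) ((g ^ j) v) := by
      intro i j h
      obtain ⟨m, ⟨h1, h2⟩ | ⟨h1, h2⟩⟩ := hE _ _ h
      · exact hne _ _ h1.symm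
      · exact hne _ _ h2.symm
    have huv : ∀ i j : ℤ, Γ.Adj ((g ^ i) u) ((g ^ j) v) := by
      intro i j
      obtain ⟨m, hm1, hm2⟩ : ∃ m : ℤ, (i : ZMod s) = m ∧ (j : ZMod t) = m := by
        obtain ⟨m, h1, h2⟩ := Nat.chineseRemainder (show Nat.Coprime s t from hgcd)
          (i : ZMod s).val (j : ZMod t).val
        refine ⟨m, ?_, ?_⟩
        · have := (ZMod.natCast_eq_natCast_iff _ _ _).2 h1
          simpa using this.symm
        · have := (ZMod.natCast_eq_natCast_iff _ _ _).2 h2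
          simpa using this.symm
      rw [(hps i m).2 hm1, (hpt j m).2 hm2]
      exact (g ^ m).map_rel_iff.2 hadj
    rintro (a | a) (b | b)
    · simpa [F] using huu _ _
    · simpa [F] using huv _ _
    · simpa [F] using (huv _ _).symm
    · simpa [F] using hvv _ _

theorem stmt0 {V : Type} [Fintype V] (Γ : SimpleGraph V)
    (hconn : Γ.Connected) (hcard : 3 ≤ Fintype.card V)
    (g : Γ ≃g Γ)
    (htrans : ∀ e ∈ Γ.edgeSet, ∀ e' ∈ Γ.edgeSet, ∃ k : ℤ, Sym2.map ⇑(g ^ k) e = e')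
    (hfree : ∀ k : ℤ, ∀ e ∈ Γ.edgeSet, Sym2.map ⇑(g ^ k) e = e → g ^ k = 1) :
    (∃ n : ℕ, 3 ≤ n ∧ Nonempty (Γ ≃g cycGraph n)) ∨
    (∃ s t : ℕ, 1 ≤ s ∧ 1 ≤ t ∧ 1 < s * t ∧ Nat.gcd s t = 1 ∧
      Nonempty (Γ ≃g completeBipartiteGraph (Fin s) (Fin t))) := by
  classical
  have hnt : Nontrivial V := Fintype.one_lt_card_iff_nontrivial.1 (by omega)
  obtain ⟨u⟩ := hconn.nonempty
  obtain ⟨v, huv⟩ := hconn.preconnected.exists_adj_of_nontrivial u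
  have hE : ∀ x y, Γ.Adj x y → ∃ k : ℤ,
      (x = (g ^ k) u ∧ y = (g ^ k) v) ∨ (x = (g ^ k) v ∧ y = (g ^ k) u) := by
    intro x y hxy
    obtain ⟨k, hk⟩ := htrans s(u, v) huv s(x, y) hxy
    rw [Sym2.map_mk, Sym2.eq_iff] at hk
    refine ⟨k, ?_⟩
    rcases hk with ⟨h1, h2⟩ | ⟨h1, h2⟩
    · exact Or.inl ⟨h1.symm, h2.symm⟩
    · exact Or.inr ⟨h2.symm, h1.symm⟩
  by_cases hne : ∀ i j : ℤ, (g ^ i) u ≠ (g ^ j) v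
  · exact Or.inr (aux_bip Γ hconn hcard g u v huv hne hE)
  · left
    push Not at hne
    obtain ⟨i, j, hij⟩ := hne
    obtain ⟨a, rfl⟩ : ∃ a : ℤ, v = (g ^ a) u := by
      refine ⟨-j + i, ?_⟩
      rw [aux_add, hij, ← aux_add]
      simp
    -- freeness on vertices
    have hfr : ∀ i j : ℤ, (g ^ i) u = (g ^ j) u → g ^ i = g ^ j := by
      intro i j h
      have h0 : (g ^ (-j + i)) u = u := by
        rw [aux_add, h, ← aux_add]; simp
      have h1 := hfree (-j + i) s(u, (g ^ a) u) huv (by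
        rw [Sym2.map_mk, h0, ← aux_add, add_comm, aux_add, h0])
      rw [zpow_add, zpow_neg, inv_mul_eq_one] at h1
      exact h1.symm
    refine aux_cycle Γ hconn hcard (g ^ a) u huv ?_
    intro i x hx
    obtain ⟨k, ⟨h1, h2⟩ | ⟨h1, h2⟩⟩ := hE _ _ hx
    · left
      rw [← zpow_mul] at h1
      rw [h2, ← hfr _ _ h1, ← aux_add, ← zpow_mul]
      ring_nf
    · right
      rw [← zpow_mul, ← aux_add] at h1
      have h3 := hfr _ _ h1
      rw [h2, ← zpow_mul, mul_sub, sub_eq_add_neg, zpow_add, h3, ← zpow_add]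
      ring_nf
end

section
/- Let s, t ≥ 1 with s·t > 1 and Nat.gcd s t = 1, and let Γ be the complete bipartite graph with parts ZMod s and ZMod t. The map σ defined by σ(inl i) = inl (i+1) and σ(inr j) = inr (j+1) is an automorphism of Γ of order s·t, the cyclic group generated by σ acts regularly (transitively and freely) on the edge set of Γ, and its orbits on the vertex set are exactly the two summands. -/
theorem crt_aux (s t : ℕ) (hs : 1 ≤ s) (ht : 1 ≤ t) (hgcd : Nat.gcd s t = 1)
    (a : ZMod s) (b : ZMod t) : ∃ k : ℤ, (k : ZMod s) = a ∧ (k : ZMod t) = b := by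
  haveI : NeZero s := ⟨by omega⟩
  haveI : NeZero t := ⟨by omega⟩
  obtain ⟨k, h1, h2⟩ := Nat.chineseRemainder (show Nat.Coprime s t from hgcd) a.val b.val
  refine ⟨(k : ℤ), ?_, ?_⟩
  · have := (ZMod.natCast_eq_natCast_iff k a.val s).2 h1
    simpa using this
  · have := (ZMod.natCast_eq_natCast_iff k b.val t).2 h2
    simpa using this

theorem edge_aux {A B : Type*} (e : Sym2 (A ⊕ B)) (he : e ∈ (completeBipartiteGraph A B).edgeSet) :
    ∃ i j, e = s(Sum.inl i, Sum.inr j) := by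
  induction e using Sym2.ind with
  | _ x y =>
    rcases x with x | x <;> rcases y with y | y
    · simp at he
    · exact ⟨x, y, rfl⟩
    · exact ⟨y, x, Sym2.eq_swap⟩
    · simp at he

theorem stmt4 (s t : ℕ) (hs : 1 ≤ s) (ht : 1 ≤ t) (hst : 1 < s * t)
    (hgcd : Nat.gcd s t = 1) :
    ∃ σ : completeBipartiteGraph (ZMod s) (ZMod t) ≃g completeBipartiteGraph (ZMod s) (ZMod t),
      (∀ i : ZMod s, σ (Sum.inl i) = Sum.inl (i + 1)) ∧
      (∀ j : ZMod t, σ (Sum.inr j) = Sum.inr (j + 1)) ∧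
      orderOf σ = s * t ∧
      -- the cyclic group generated by `σ` acts transitively on the edge set
      (∀ e ∈ (completeBipartiteGraph (ZMod s) (ZMod t)).edgeSet,
        ∀ e' ∈ (completeBipartiteGraph (ZMod s) (ZMod t)).edgeSet,
          ∃ k : ℤ, Sym2.map ⇑(σ ^ k) e = e') ∧
      -- and freely
      (∀ k : ℤ, ∀ e ∈ (completeBipartiteGraph (ZMod s) (ZMod t)).edgeSet,
        Sym2.map ⇑(σ ^ k) e = e → σ ^ k = 1) ∧
      -- its vertex orbits are exactly the two summands
      (∀ i : ZMod s, {w : ZMod s ⊕ ZMod t | ∃ k : ℤ, (σ ^ k) (Sum.inl i) = w} =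
        Set.range Sum.inl) ∧
      (∀ j : ZMod t, {w : ZMod s ⊕ ZMod t | ∃ k : ℤ, (σ ^ k) (Sum.inr j) = w} =
        Set.range Sum.inr) := by
  let σ : completeBipartiteGraph (ZMod s) (ZMod t) ≃g completeBipartiteGraph (ZMod s) (ZMod t) :=
    { toEquiv := Equiv.sumCongr (Equiv.addRight 1) (Equiv.addRight 1)
      map_rel_iff' := by
        rintro (a | a) (b | b) <;> simp }
  have hl : ∀ i : ZMod s, σ (Sum.inl i) = Sum.inl (i + 1) := fun i => rfl
  have hr : ∀ j : ZMod t, σ (Sum.inr j) = Sum.inr (j + 1) := fun j => rfl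
  have hl' : ∀ i : ZMod s, σ⁻¹ (Sum.inl i) = Sum.inl (i - 1) := fun i => by
    have h := RelIso.inv_apply_self σ (Sum.inl (i - 1))
    rwa [hl, sub_add_cancel] at h
  have hr' : ∀ i : ZMod t, σ⁻¹ (Sum.inr i) = Sum.inr (i - 1) := fun i => by
    have h := RelIso.inv_apply_self σ (Sum.inr (i - 1))
    rwa [hr, sub_add_cancel] at h
  have hpl : ∀ (k : ℤ) (i : ZMod s), (σ ^ k) (Sum.inl i) = Sum.inl (i + k) := by
    intro k
    induction k using Int.induction_on with
    | zero => intro i; simp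
    | succ n ih => intro i; rw [zpow_add_one, RelIso.mul_apply, hl, ih]; congr 1; push_cast; ring
    | pred n ih => intro i; rw [zpow_sub_one, RelIso.mul_apply, hl', ih]; congr 1; push_cast; ring
  have hpr : ∀ (k : ℤ) (i : ZMod t), (σ ^ k) (Sum.inr i) = Sum.inr (i + k) := by
    intro k
    induction k using Int.induction_on with
    | zero => intro i; simp
    | succ n ih => intro i; rw [zpow_add_one, RelIso.mul_apply, hr, ih]; congr 1; push_cast; ring
    | pred n ih => intro i; rw [zpow_sub_one, RelIso.mul_apply, hr', ih]; congr 1; push_cast; ring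
  have hone : ∀ k : ℤ, (k : ZMod s) = 0 → (k : ZMod t) = 0 → σ ^ k = 1 := by
    intro k h1 h2
    ext x
    rcases x with x | x
    · rw [hpl, h1, add_zero]; rfl
    · rw [hpr, h2, add_zero]; rfl
  refine ⟨σ, hl, hr, ?_, ?_, ?_, ?_, ?_⟩
  · apply Nat.dvd_antisymm
    · apply orderOf_dvd_of_pow_eq_one
      rw [← zpow_natCast]
      apply hone <;> simp
    · have h := pow_orderOf_eq_one σ
      rw [← zpow_natCast] at h
      apply Nat.Coprime.mul_dvd_of_dvd_of_dvd hgcd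
      · have h1 := hpl (orderOf σ : ℤ) 0
        rw [h] at h1
        have h2 := Sum.inl_injective h1
        rw [zero_add, Int.cast_natCast] at h2
        exact (ZMod.natCast_eq_zero_iff _ _).1 h2.symm
      · have h1 := hpr (orderOf σ : ℤ) 0
        rw [h] at h1
        have h2 := Sum.inr_injective h1
        rw [zero_add, Int.cast_natCast] at h2
        exact (ZMod.natCast_eq_zero_iff _ _).1 h2.symm
  · intro e he e' he'
    obtain ⟨i, j, rfl⟩ := edge_aux e he
    obtain ⟨i', j', rfl⟩ := edge_aux e' he'
    obtain ⟨k, h1, h2⟩ := crt_aux s t hs ht hgcd (i' - i) (j' - j)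
    refine ⟨k, ?_⟩
    rw [Sym2.map_mk, hpl, hpr, h1, h2, add_sub_cancel, add_sub_cancel]
  · intro k e he h
    obtain ⟨i, j, rfl⟩ := edge_aux e he
    rw [Sym2.map_mk, hpl, hpr] at h
    simp at h
    exact hone k h.1 h.2
  · intro i
    ext w
    constructor
    · rintro ⟨k, rfl⟩
      exact ⟨_, (hpl k i).symm⟩
    · rintro ⟨i', rfl⟩
      obtain ⟨k, h1, -⟩ := crt_aux s t hs ht hgcd (i' - i) 0
      exact ⟨k, by rw [hpl, h1, add_sub_cancel]⟩
  · intro i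
    ext w
    constructor
    · rintro ⟨k, rfl⟩
      exact ⟨_, (hpr k i).symm⟩
    · rintro ⟨i', rfl⟩
      obtain ⟨k, -, h1⟩ := crt_aux s t hs ht hgcd 0 (i' - i)
      exact ⟨k, by rw [hpr, h1, add_sub_cancel]⟩
end

section
/- Let n ≥ 5 and let a, b : ZMod n be such that a, −a, b, −b are four pairwise distinct nonzero elements, the additive subgroup of ZMod n generated by {a, b} is all of ZMod n, and either the additive order of a + b equals n or the additive order of a − b equals n. Then Γ = Circ(n,{a,−a,b,−b}) has an Eulerian circuit with edge list (e_0, …, e_{2n−1}) such that there exist automorphisms σ and ρ of Γ with σ(e_i) = e_{(i+2) mod 2n} for all i and ρ(e_i) = e_{(−i) mod 2n} for all i. -/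
/-- The circulant graph `Circ(n, {a, -a, b, -b})` on `ZMod n`: distinct `i, j` are adjacent
iff `j - i ∈ {a, -a, b, -b}`. -/
def circGraph (n : ℕ) (a b : ZMod n) : SimpleGraph (ZMod n) :=
  SimpleGraph.fromRel (fun i j => j - i = a ∨ j - i = b)

theorem walk_of_seq {V : Type*} (G : SimpleGraph V) (f : ℕ → V)
    (h : ∀ i, G.Adj (f i) (f (i+1))) (m : ℕ) :
    ∃ p : G.Walk (f 0) (f m), p.edges = (List.range m).map (fun i => s(f i, f (i+1))) := by
  induction m with
  | zero => exact ⟨SimpleGraph.Walk.nil, by simp⟩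
  | succ m ih =>
    obtain ⟨p, hp⟩ := ih
    refine ⟨p.concat (h m), ?_⟩
    rw [SimpleGraph.Walk.edges_concat, hp, List.range_succ]
    simp

theorem circ_adj (n : ℕ) (a b : ZMod n) (ha : a ≠ 0) (hb : b ≠ 0) (x y : ZMod n) :
    (circGraph n a b).Adj x y ↔ (y = x + a ∨ y = x + b ∨ x = y + a ∨ x = y + b) := by
  unfold circGraph
  rw [SimpleGraph.fromRel_adj]
  constructor
  · rintro ⟨_, (h | h) | (h | h)⟩ <;> grind
  · rintro (h | h | h | h) <;> grind

theorem circ_neg (n : ℕ) (a b : ZMod n) (ha : a ≠ 0) (hb : b ≠ 0) :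
    circGraph n a (-b) = circGraph n a b := by
  ext x y
  rw [circ_adj n a b ha hb, circ_adj n a (-b) ha (neg_ne_zero.mpr hb)]
  grind

def vseq {n : ℕ} (a b : ZMod n) (i : ℕ) : ZMod n :=
  (i / 2) • (a + b) + if i % 2 = 0 then 0 else a

theorem vseq_even {n : ℕ} (a b : ZMod n) (k : ℕ) : vseq a b (2 * k) = k • (a + b) := by
  simp [vseq]

theorem vseq_odd {n : ℕ} (a b : ZMod n) (k : ℕ) : vseq a b (2 * k + 1) = k • (a + b) + a := by
  have h1 : (2 * k + 1) / 2 = k := by omega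
  have h2 : (2 * k + 1) % 2 = 1 := by omega
  simp [vseq, h1, h2]

def eseq {n : ℕ} (a b : ZMod n) (i : ℕ) : Sym2 (ZMod n) := s(vseq a b i, vseq a b (i + 1))

theorem eseq_even {n : ℕ} (a b : ZMod n) (k : ℕ) :
    eseq a b (2 * k) = s(k • (a + b), k • (a + b) + a) := by
  rw [eseq, vseq_even, vseq_odd]

theorem eseq_odd {n : ℕ} (a b : ZMod n) (k : ℕ) :
    eseq a b (2 * k + 1) = s(k • (a + b) + a, k • (a + b) + a + b) := by
  rw [eseq, vseq_odd, show 2 * k + 1 + 1 = 2 * (k + 1) by ring, vseq_even, succ_nsmul, add_assoc _ a b]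

theorem eseq_mod {n : ℕ} (a b : ZMod n) (i : ℕ) (hi : i < 4 * n) :
    eseq a b (i % (2 * n)) = eseq a b i := by
  have hper : ∀ k, eseq a b (k + 2 * n) = eseq a b k := by
    intro k
    have : ∀ k, vseq a b (k + 2 * n) = vseq a b k := by
      intro k
      have h1 : (k + 2 * n) / 2 = k / 2 + n := by omega
      have h2 : (k + 2 * n) % 2 = k % 2 := by omega
      simp [vseq, h1, h2, add_nsmul]
    rw [eseq, eseq, this, show k + 2 * n + 1 = k + 1 + 2 * n by ring, this]
  by_cases h : i < 2 * n
  · rw [Nat.mod_eq_of_lt h]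
  · obtain ⟨k, rfl⟩ := Nat.exists_eq_add_of_le (not_lt.mp h)
    rw [Nat.add_mod_left, Nat.mod_eq_of_lt (by omega), add_comm, hper]

theorem main_case (n : ℕ) (hn : 5 ≤ n) (a b : ZMod n)
    (ha : a ≠ 0) (hb : b ≠ 0) (hdist : ([a, -a, b, -b] : List (ZMod n)).Nodup)
    (hord : addOrderOf (a + b) = n) :
    ∃ (v : ZMod n) (p : (circGraph n a b).Walk v v), p.IsEulerian ∧
      (∃ σ : circGraph n a b ≃g circGraph n a b, ∀ i : Fin p.edges.length,
        Sym2.map ⇑σ (p.edges.get i) =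
          p.edges.get ⟨((i : ℕ) + 2) % p.edges.length, Nat.mod_lt _ i.pos⟩) ∧
      (∃ ρ : circGraph n a b ≃g circGraph n a b, ∀ i : Fin p.edges.length,
        Sym2.map ⇑ρ (p.edges.get i) =
          p.edges.get ⟨(p.edges.length - (i : ℕ)) % p.edges.length, Nat.mod_lt _ i.pos⟩) := by
  have : NeZero n := ⟨by omega⟩
  have hadj := circ_adj n a b ha hb
  have hinj : ∀ k l, k < n → l < n → k • (a + b) = l • (a + b) → k = l := by
    intro k l hk hl h
    exact nsmul_injOn_Iio_addOrderOf (by simpa [hord] using hk) (by simpa [hord] using hl) h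
  have hsurj : ∀ x : ZMod n, ∃ k, k < n ∧ k • (a + b) = x := by
    have hi : Function.Injective (fun k : Fin n => (k : ℕ) • (a + b)) := by
      intro k l h
      exact Fin.ext (hinj _ _ k.2 l.2 h)
    have hbij := (Fintype.bijective_iff_injective_and_card _).mpr ⟨hi, by simp [ZMod.card]⟩
    intro x
    obtain ⟨k, hk⟩ := hbij.2 x
    exact ⟨k, k.2, hk⟩
  obtain ⟨p, hp⟩ := walk_of_seq (circGraph n a b) (vseq a b) (by
    intro i
    obtain ⟨k, rfl | rfl⟩ : ∃ k, i = 2 * k ∨ i = 2 * k + 1 := ⟨i / 2, by omega⟩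
    · rw [vseq_even, vseq_odd, hadj]; simp
    · rw [vseq_odd, show 2 * k + 1 + 1 = 2 * (k + 1) by ring, vseq_even, hadj, succ_nsmul]
      right; left; ring) (2 * n)
  have h0 : vseq a b (2 * n) = vseq a b 0 := by
    rw [vseq_even]; simp [vseq]
  obtain ⟨q, hq⟩ : ∃ q : (circGraph n a b).Walk (vseq a b 0) (vseq a b 0),
      q.edges = (List.range (2 * n)).map (eseq a b) :=
    ⟨p.copy rfl h0, by rw [SimpleGraph.Walk.edges_copy, hp]; rfl⟩
  have hlen : q.edges.length = 2 * n := by rw [hq]; simp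
  have hget : ∀ i (h : i < q.edges.length), q.edges.get ⟨i, h⟩ = eseq a b i := by
    intro i h
    simp [hq]
  refine ⟨_, q, ?_, ?_, ?_⟩
  · rw [SimpleGraph.Walk.isEulerian_iff]
    refine ⟨⟨?_⟩, ?_⟩
    · rw [hq]
      refine List.Nodup.map_on ?_ List.nodup_range
      intro i hi j hj h
      rw [List.mem_range] at hi hj
      obtain ⟨k, hk⟩ : ∃ k, i = 2 * k ∨ i = 2 * k + 1 := ⟨i / 2, by omega⟩
      obtain ⟨l, hl⟩ : ∃ k, j = 2 * k ∨ j = 2 * k + 1 := ⟨j / 2, by omega⟩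
      have hkl := hinj k l (by omega) (by omega)
      simp only [List.nodup_cons, List.mem_cons, not_or] at hdist
      rcases hk with rfl | rfl <;> rcases hl with rfl | rfl <;>
        simp only [eseq_even, eseq_odd, Sym2.eq_iff] at h <;>
        generalize k • (a + b) = x at * <;> generalize l • (a + b) = y at * <;> grind
    · intro e
      induction e with | _ x y
      intro h
      rw [SimpleGraph.mem_edgeSet, hadj] at h
      rw [hq, List.mem_map]
      have hA : ∀ x, ∃ i ∈ List.range (2 * n), eseq a b i = s(x, x + a) := by
        intro x
        obtain ⟨k, hk, rfl⟩ := hsurj x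
        exact ⟨2 * k, by rw [List.mem_range]; omega, eseq_even a b k⟩
      have hB : ∀ x, ∃ i ∈ List.range (2 * n), eseq a b i = s(x, x + b) := by
        intro x
        obtain ⟨k, hk, h⟩ := hsurj (x - a)
        exact ⟨2 * k + 1, by rw [List.mem_range]; omega, by rw [eseq_odd, h]; simp⟩
      rcases h with rfl | rfl | rfl | rfl
      · exact hA _
      · exact hB _
      · rw [Sym2.eq_swap]; exact hA _
      · rw [Sym2.eq_swap]; exact hB _
  · refine ⟨⟨Equiv.addRight (a + b), ?_⟩, ?_⟩
    · intro x y
      simp only [Equiv.coe_addRight, hadj]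
      grind
    · rintro ⟨i, hi⟩
      rw [hget, hget]
      simp only [hlen]
      rw [eseq_mod _ _ _ (by omega)]
      obtain ⟨k, rfl | rfl⟩ : ∃ k, i = 2 * k ∨ i = 2 * k + 1 := ⟨i / 2, by omega⟩
      · rw [show 2 * k + 2 = 2 * (k + 1) by ring]
        simp only [eseq_even, succ_nsmul]
        simp [Sym2.eq_iff]; left; ring
      · rw [show 2 * k + 1 + 2 = 2 * (k + 1) + 1 by ring]
        simp only [eseq_odd, succ_nsmul]
        simp [Sym2.eq_iff]; left; constructor <;> ring
  · refine ⟨⟨Equiv.subLeft a, ?_⟩, ?_⟩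
    · intro x y
      simp only [Equiv.subLeft_apply, hadj]
      grind
    · rintro ⟨i, hi⟩
      rw [hget, hget]
      simp only [hlen]
      rw [eseq_mod _ _ _ (by omega)]
      have hn0 : n • (a + b) = 0 := by simp
      obtain ⟨k, rfl | rfl⟩ : ∃ k, i = 2 * k ∨ i = 2 * k + 1 := ⟨i / 2, by omega⟩
      · obtain ⟨l, hl⟩ : ∃ l, n = k + l := ⟨n - k, by omega⟩
        replace hn0 : (k + l) • (a + b) = 0 := by rw [← hl]; exact hn0
        rw [show 2 * n - 2 * k = 2 * l by omega]
        rw [add_nsmul] at hn0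
        simp only [eseq_even, Sym2.map_mk, Sym2.eq_iff]
        change (a - _ = _ ∧ a - _ = _) ∨ (a - _ = _ ∧ a - _ = _)
        grind
      · obtain ⟨l, hl⟩ : ∃ l, n = k + l + 1 := ⟨n - k - 1, by omega⟩
        replace hn0 : (k + l + 1) • (a + b) = 0 := by rw [← hl]; exact hn0
        rw [show 2 * n - (2 * k + 1) = 2 * l + 1 by omega]
        rw [succ_nsmul, add_nsmul] at hn0
        simp only [eseq_odd, Sym2.map_mk, Sym2.eq_iff]
        change (a - _ = _ ∧ a - _ = _) ∨ (a - _ = _ ∧ a - _ = _)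
        grind

theorem stmt6 (n : ℕ) (hn : 5 ≤ n) (a b : ZMod n)
    (ha : a ≠ 0) (hb : b ≠ 0) (hdist : ([a, -a, b, -b] : List (ZMod n)).Nodup)
    (hgen : AddSubgroup.closure {a, b} = (⊤ : AddSubgroup (ZMod n)))
    (hord : addOrderOf (a + b) = n ∨ addOrderOf (a - b) = n) :
    ∃ (v : ZMod n) (p : (circGraph n a b).Walk v v), p.IsEulerian ∧
      (∃ σ : circGraph n a b ≃g circGraph n a b, ∀ i : Fin p.edges.length,
        Sym2.map ⇑σ (p.edges.get i) =
          p.edges.get ⟨((i : ℕ) + 2) % p.edges.length, Nat.mod_lt _ i.pos⟩) ∧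
      (∃ ρ : circGraph n a b ≃g circGraph n a b, ∀ i : Fin p.edges.length,
        Sym2.map ⇑ρ (p.edges.get i) =
          p.edges.get ⟨(p.edges.length - (i : ℕ)) % p.edges.length, Nat.mod_lt _ i.pos⟩) := by
  rcases hord with h | h
  · exact main_case n hn a b ha hb hdist h
  · rw [← circ_neg n a b ha hb]
    refine main_case n hn a (-b) ha (neg_ne_zero.mpr hb) ?_ (by rwa [← sub_eq_add_neg])
    simp only [List.nodup_cons, List.mem_cons, not_or] at hdist ⊢
    grind
end

section
/- Let n ≥ 5 and let a, b : ZMod n be such that a, −a, b, −b are four pairwise distinct nonzero elements and the additive subgroup of ZMod n generated by {a, b} is all of ZMod n, and suppose that the automorphism group of Γ = Circ(n,{a,−a,b,−b}) does not act transitively on the edge set of Γ. If Γ has an Eulerian circuit with edge list (e_0, …, e_{2n−1}) for which there exists an automorphism σ of Γ with σ(e_i) = e_{(i+2) mod 2n} for all i, then the additive order of a + b equals n or the additive order of a − b equals n. -/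
lemma inv_nat {M : ℕ} {P : ZMod M → Prop} {k : ZMod M} (h : ∀ i, P i ↔ P (i + k)) (m : ℕ) (i : ZMod M) :
    P i ↔ P (i + m * k) := by
  induction m with
  | zero => simp
  | succ m ih =>
    rw [ih, h]
    have : i + (m : ZMod M) * k + k = i + ((m + 1 : ℕ) : ZMod M) * k := by push_cast; ring
    rw [this]

lemma inv_unit {M : ℕ} [NeZero M] {P : ZMod M → Prop} {k c : ZMod M} (hc : k * c = 1)
    (h : ∀ i, P i ↔ P (i + k)) (i j : ZMod M) : P i ↔ P j := by
  have := inv_nat h ((c * (j - i)).val) i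
  rw [ZMod.natCast_zmod_val] at this
  have e : i + c * (j - i) * k = j := by linear_combination (j - i) * hc
  rwa [e] at this

lemma unit_or {M : ℕ} [NeZero M] {k l : ZMod M} (hkl : k + l = 1) (h : k + k = l + l) :
    (∃ c, k * c = 1) ∨ (∃ c, l * c = 1) := by
  obtain ⟨t, ht⟩ : ∃ t, t = k - l := ⟨_, rfl⟩
  have h2t : t + t = 0 := by rw [ht]; linear_combination h
  have key : t * k = 0 ∨ t * k = t := by
    rcases Nat.even_or_odd' k.val with ⟨y, hy | hy⟩
    · left
      have := congrArg (Nat.cast : ℕ → ZMod M) hy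
      rw [ZMod.natCast_zmod_val] at this
      push_cast at this
      rw [this]; linear_combination (y : ZMod M) * h2t
    · right
      have := congrArg (Nat.cast : ℕ → ZMod M) hy
      rw [ZMod.natCast_zmod_val] at this
      push_cast at this
      rw [this]; linear_combination (y : ZMod M) * h2t
  have hk2 : k + k = 1 + t := by rw [ht]; linear_combination hkl
  have hl2 : l + l = 1 + t := by rw [← h, hk2]
  rcases key with h0 | h0
  · right
    refine ⟨2 + t, ?_⟩
    have : t * l = t := by linear_combination t * hkl - h0
    linear_combination hl2 + this + h2t
  · left
    refine ⟨2 + t, ?_⟩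
    linear_combination hk2 + h0 + h2t

lemma step {M n : ℕ} {a : ZMod n} {g : ZMod M → ZMod n} (ha : a + a ≠ 0)
    (hinj : Function.Injective g) {k : ZMod M} (hk : k + k ≠ 0)
    (hA : ∀ i, g (i + k) = g i + a ∨ g (i + k) = g i - a) (i : ZMod M) :
    g (i + k) = g i + a ↔ g (i + k + k) = g (i + k) + a := by
  have hne : g (i + k + k) ≠ g i := by
    intro h
    apply hk
    have := hinj h
    linear_combination this
  have ha' : ∀ x : ZMod n, x - a ≠ x + a := by
    intro x h; apply ha; linear_combination -h
  rcases hA i with h | h <;> rcases hA (i + k) with h' | h'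
  · simp [h, h']
  · exact absurd (by rw [h', h]; ring) hne
  · exact absurd (by rw [h', h]; ring) hne
  · exact iff_of_false (by rw [h]; exact ha' _) (by rw [h']; exact ha' _)

lemma ord_of {M n : ℕ} [NeZero M] {g : ZMod M → ZMod n} (hsurj : Function.Surjective g) (c : ZMod n)
    (h : ∀ i, g (i + 1) = g i + c) : addOrderOf c = n := by
  have h1 : ∀ m : ℕ, g m = g 0 + m • c := by
    intro m
    induction m with
    | zero => simp
    | succ m ih => push_cast; rw [h, ih, succ_nsmul]; ring
  have h2 : ∀ x : ZMod n, x ∈ AddSubgroup.zmultiples c := by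
    intro x
    obtain ⟨i, hi⟩ := hsurj (g 0 + x)
    rw [← ZMod.natCast_zmod_val i, h1] at hi
    rw [← add_left_cancel hi]
    exact AddSubgroup.nsmul_mem_zmultiples c _
  have := addOrderOf_eq_card_of_forall_mem_zmultiples h2
  rw [this, Nat.card_zmod]

lemma core {M n : ℕ} [NeZero M] (h2 : (2 : ZMod M) ≠ 0) {a b : ZMod n}
    (ha : a + a ≠ 0) (hb : b + b ≠ 0) {g : ZMod M → ZMod n} (hinj : Function.Injective g)
    (hsurj : Function.Surjective g) {k l : ZMod M} (hkl : k + l = 1)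
    (hk : k + k ≠ 0) (hl : l + l ≠ 0)
    (hA : ∀ i, g (i + k) = g i + a ∨ g (i + k) = g i - a)
    (hB : ∀ i, g (i + l) = g i + b ∨ g (i + l) = g i - b) :
    addOrderOf (a + b) = n ∨ addOrderOf (a - b) = n := by
  obtain ⟨P, hP⟩ : ∃ P : ZMod M → Prop, P = fun i => g (i + k) = g i + a := ⟨_, rfl⟩
  obtain ⟨Q, hQ⟩ : ∃ Q : ZMod M → Prop, Q = fun i => g (i + l) = g i + b := ⟨_, rfl⟩
  have ha' : ∀ x : ZMod n, x - a ≠ x + a := by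
    intro x h; apply ha; linear_combination -h
  have hb' : ∀ x : ZMod n, x - b ≠ x + b := by
    intro x h; apply hb; linear_combination -h
  have hPk : ∀ i, P i ↔ P (i + k) := by
    intro i; rw [hP]; exact step ha hinj hk hA i
  have hQl : ∀ i, Q i ↔ Q (i + l) := by
    intro i; rw [hQ]; exact step hb hinj hl hB i
  have pT : ∀ i, P i → g (i + k) = g i + a := by intro i h; rw [hP] at h; exact h
  have pF : ∀ i, ¬ P i → g (i + k) = g i - a := by
    intro i h; rw [hP] at h; exact (hA i).resolve_left h
  have qT : ∀ i, Q i → g (i + l) = g i + b := by intro i h; rw [hQ] at h; exact h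
  have qF : ∀ i, ¬ Q i → g (i + l) = g i - b := by
    intro i h; rw [hQ] at h; exact (hB i).resolve_left h
  have comm : ∀ i, g (i + k + l) = g (i + l + k) := by intro i; congr 1; ring
  have main : ∀ i, ((P i ↔ P (i + l)) ∧ (Q i ↔ Q (i + k))) ∨
      (¬ (P i ↔ P (i + l)) ∧ ¬ (Q i ↔ Q (i + k)) ∧ (a + a = b + b ∨ a + a = - (b + b))) := by
    intro i
    have hc := comm i
    by_cases h1 : P i <;> by_cases h2 : P (i + l) <;> by_cases h3 : Q i <;> by_cases h4 : Q (i + k) <;>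
      simp only [h1, h2, h3, h4, true_and, and_true, iff_true, iff_false, not_true, not_false_iff,
        false_or, or_false, false_and, and_false] <;>
      (first | rw [qT _ h4] at hc | rw [qF _ h4] at hc) <;>
      (first | rw [pT _ h1] at hc | rw [pF _ h1] at hc) <;>
      (first | rw [pT _ h2] at hc | rw [pF _ h2] at hc) <;>
      (first | rw [qT _ h3] at hc | rw [qF _ h3] at hc) <;>
      first
      | (exact hb (by linear_combination hc))
      | (exact hb (by linear_combination -hc))
      | (exact ha (by linear_combination hc))
      | (exact ha (by linear_combination -hc))
      | (left; linear_combination hc)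
      | (left; linear_combination -hc)
      | (right; linear_combination hc)
      | (right; linear_combination -hc)
  have good : ∀ i, (P i ↔ P (i + l)) ∧ (Q i ↔ Q (i + k)) := by
    by_contra hcon
    obtain ⟨i, hi⟩ := not_forall.1 hcon
    rcases main i with h | ⟨hp, hq, hab⟩
    · exact hi h
    have e1 : g (k + k) = g 0 + (a + a) ∨ g (k + k) = g 0 - (a + a) := by
      have e := hPk 0
      have e0 : g (k + k) = g (0 + k + k) := by congr 1; ring
      by_cases h : P 0
      · left; rw [e0, pT _ (e.1 h), pT _ h]; ring
      · right; rw [e0, pF _ (fun h' => h (e.2 h')), pF _ h]; ring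
    have e2 : g (l + l) = g 0 + (b + b) ∨ g (l + l) = g 0 - (b + b) := by
      have e := hQl 0
      have e0 : g (l + l) = g (0 + l + l) := by congr 1; ring
      by_cases h : Q 0
      · left; rw [e0, qT _ (e.1 h), qT _ h]; ring
      · right; rw [e0, qF _ (fun h' => h (e.2 h')), qF _ h]; ring
    have e3 : (g (l + l) = g 0 + (b + b) ∧ g (-(l + l)) = g 0 - (b + b)) ∨
       (g (l + l) = g 0 - (b + b) ∧ g (-(l+l)) = g 0 + (b + b)) := by
      have f1 := hQl (-(l+l))
      have f2 := hQl (-(l+l) + l)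
      have e0 : -(l+l) + l + l = 0 := by ring
      rw [e0] at f2
      have g0 : g 0 = g (-(l+l) + l + l) := by rw [e0]
      have f3 := hQl 0
      have e00 : g (l + l) = g (0 + l + l) := by congr 1; ring
      by_cases h : Q 0
      · left
        constructor
        · rw [e00, qT _ (f3.1 h), qT _ h]; ring
        · rw [g0, qT _ (f2.2 h), qT _ (f1.2 (f2.2 h))]; ring
      · right
        have h' := fun h' => h (f2.1 h')
        have h'' := fun hh => h' (f1.1 hh)
        constructor
        · rw [e00, qF _ (fun h' => h (f3.2 h')), qF _ h]; ring
        · rw [g0, qF _ h', qF _ h'']; ring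
    have e4 : k + k = l + l ∨ k + k = -(l + l) := by
      rcases e3 with ⟨x, y⟩ | ⟨x, y⟩ <;> rcases e1 with z | z <;> rcases hab with w | w <;>
      first
      | (left; apply hinj; rw [z, x, w]; done)
      | (right; apply hinj; rw [z, y, w]; done)
      | (left; apply hinj; rw [z, x, w]; ring1)
      | (right; apply hinj; rw [z, y, w]; ring1)
    have e5 : k + k = l + l := by
      rcases e4 with h | h
      · exact h
      · exact absurd (by linear_combination h - 2 * hkl) h2
    rcases unit_or hkl e5 with ⟨c, hc⟩ | ⟨c, hc⟩
    · exact hp (inv_unit hc hPk _ _)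
    · exact hq (inv_unit hc hQl _ _)
  have P1 : ∀ i, P i ↔ P (i + 1) := by
    intro i; rw [hPk i, (good (i + k)).1, add_assoc, hkl]
  have Q1 : ∀ i, Q i ↔ Q (i + 1) := by
    intro i; rw [hQl i, (good (i + l)).2, add_assoc, add_comm l k, hkl]
  have Pc := inv_unit (one_mul 1) P1
  have Qc := inv_unit (one_mul 1) Q1
  have e : ∀ i, g (i + 1) = g (i + k + l) := by intro i; rw [← hkl]; congr 1; ring
  by_cases hp : P 0 <;> by_cases hq : Q 0
  · left; apply ord_of hsurj
    intro i; rw [e, qT _ ((Qc _ _).1 hq), pT _ ((Pc _ _).1 hp)]; ring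
  · right; apply ord_of hsurj
    intro i; rw [e, qF _ (fun h => hq ((Qc _ _).1 h)), pT _ ((Pc _ _).1 hp)]; ring
  · right; rw [← addOrderOf_neg]; apply ord_of hsurj
    intro i; rw [e, qT _ ((Qc _ _).1 hq), pF _ (fun h => hp ((Pc _ _).1 h))]; ring
  · left; rw [← addOrderOf_neg]; apply ord_of hsurj
    intro i; rw [e, qF _ (fun h => hq ((Qc _ _).1 h)), pF _ (fun h => hp ((Pc _ _).1 h))]; ring

lemma invol {n : ℕ} {σ : Equiv.Perm (ZMod n)} {p q a : ZMod n} (ha : a + a ≠ 0)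
    (disj : ∀ s t : ℕ, (σ ^ s) p ≠ (σ ^ t) q)
    (H2 : ∀ i : ℕ, (σ ^ i) q = (σ ^ i) p + a ∨ (σ ^ i) q = (σ ^ i) p - a)
    (H3 : ∀ x, ∃ i : ℕ, s(x, x + a) = s((σ ^ i) p, (σ ^ i) q)) :
    ∃ i : ℕ, (σ ^ i) p = p ∧ (σ ^ i) q ≠ q ∧ σ ^ (2 * i) = 1 := by
  have ha' : ∀ x : ZMod n, x - a ≠ x + a := by
    intro x h; apply ha; linear_combination -h
  have key : ∃ i : ℕ, (σ ^ i) p = p ∧ (σ ^ i) q ≠ q ∧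
      ((σ ^ i) q = p + a ∨ (σ ^ i) q = p - a) ∧ (q = p + a ∨ q = p - a) := by
    have h0 := H2 0
    simp only [pow_zero, Equiv.Perm.one_apply] at h0
    rcases h0 with h0 | h0
    · obtain ⟨i, hi⟩ := H3 (p - a)
      rw [sub_add_cancel, Sym2.eq_iff] at hi
      rcases hi with ⟨h1, h2⟩ | ⟨h1, h2⟩
      · exact absurd h2 (disj 0 i)
      · exact ⟨i, h2.symm, by rw [← h1, h0]; exact ha' _, Or.inr h1.symm, Or.inl h0⟩
    · obtain ⟨i, hi⟩ := H3 p
      rw [Sym2.eq_iff] at hi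
      rcases hi with ⟨h1, h2⟩ | ⟨h1, h2⟩
      · exact ⟨i, h1.symm, by rw [← h2, h0]; exact (ha' _).symm, Or.inl h2.symm, Or.inr h0⟩
      · exact absurd h1 (disj 0 i)
  obtain ⟨i, h1, h2, h3, h4⟩ := key
  have hp2 : (σ ^ (2 * i)) p = p := by rw [two_mul, pow_add, Equiv.Perm.mul_apply, h1, h1]
  have hq2 : (σ ^ (2 * i)) q = q := by
    have h5 := H2 (2 * i)
    rw [hp2] at h5
    have h6 : (σ ^ (2 * i)) q ≠ (σ ^ i) q := by
      rw [two_mul, pow_add, Equiv.Perm.mul_apply]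
      intro h; exact h2 ((σ ^ i).injective h)
    rcases h3 with h3 | h3 <;> rcases h4 with h4 | h4 <;> rcases h5 with h5 | h5 <;>
      first
      | exact absurd (h3.trans h4.symm) h2
      | exact absurd (h5.trans h3.symm) h6
      | exact h5.trans h4.symm
  have comm : ∀ (s : ℕ) x, (σ ^ (2 * i)) x = x → (σ ^ (2 * i)) ((σ ^ s) x) = (σ ^ s) x := by
    intro s x hx
    rw [← Equiv.Perm.mul_apply, ← pow_add, add_comm, pow_add, Equiv.Perm.mul_apply, hx]
  refine ⟨i, h1, h2, ?_⟩
  ext1 x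
  rw [Equiv.Perm.one_apply]
  obtain ⟨s, hs⟩ := H3 x
  rw [Sym2.eq_iff] at hs
  rcases hs with ⟨h, _⟩ | ⟨h, _⟩
  · rw [h]; exact comm _ _ hp2
  · rw [h]; exact comm _ _ hq2

lemma kne {M n : ℕ} {a : ZMod n} (ha : a + a ≠ 0) {g : ZMod M → ZMod n}
    (hinj : Function.Injective g) {k : ZMod M}
    (H3 : ∀ x, ∃ i, s(x, x + a) = s(g i, g (i + k))) : k + k ≠ 0 := by
  intro hk
  have hmk : -k = k := by linear_combination -hk
  have e1 : g k = g 0 + a := by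
    obtain ⟨i, hi⟩ := H3 (g 0)
    rw [Sym2.eq_iff] at hi
    rcases hi with ⟨h1, h2⟩ | ⟨h1, h2⟩
    · rw [h2, ← hinj h1, zero_add]
    · have : i = k := by rw [← hmk]; linear_combination -(hinj h1)
      rw [h2, this]
  have e2 : g k = g 0 - a := by
    obtain ⟨i, hi⟩ := H3 (g 0 - a)
    rw [sub_add_cancel, Sym2.eq_iff] at hi
    rcases hi with ⟨h2, h1⟩ | ⟨h2, h1⟩
    · have : i = k := by rw [← hmk]; linear_combination -(hinj h1)
      rw [h2, this]
    · rw [h2, ← hinj h1, zero_add]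
  apply ha
  linear_combination e2 - e1

lemma mid {n : ℕ} (hn : 5 ≤ n) {a b : ZMod n} (ha : a + a ≠ 0) (hb : b + b ≠ 0)
    (hab : a ≠ b) (hab' : a ≠ -b) (σ : Equiv.Perm (ZMod n)) (u : ℕ → ZMod n)
    (H1 : ∀ i, s(σ (u i), σ (u (i + 1))) = s(u (i + 2), u (i + 3)))
    (H2a : ∀ i, u (2 * i + 1) = u (2 * i) + a ∨ u (2 * i + 1) = u (2 * i) - a)
    (H2b : ∀ i, u (2 * i + 2) = u (2 * i + 1) + b ∨ u (2 * i + 2) = u (2 * i + 1) - b)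
    (H3a : ∀ x, ∃ i, s(x, x + a) = s(u (2 * i), u (2 * i + 1)))
    (H3b : ∀ x, ∃ i, s(x, x + b) = s(u (2 * i + 1), u (2 * i + 2))) :
    addOrderOf (a + b) = n ∨ addOrderOf (a - b) = n := by
  have : NeZero n := ⟨by omega⟩
  have hne : ∀ i, u (i + 2) ≠ u i := by
    intro i h
    rcases Nat.even_or_odd' i with ⟨j, rfl | rfl⟩
    · rcases H2a j with h1 | h1 <;> rcases H2b j with h2 | h2 <;> rw [h2, h1] at h
      · exact hab' (by linear_combination h)
      · exact hab (by linear_combination h)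
      · exact hab (by linear_combination -h)
      · exact hab' (by linear_combination -h)
    · have h1 := H2a (j + 1)
      rw [show 2 * (j + 1) = 2 * j + 2 by ring] at h1
      rw [show 2 * j + 1 + 2 = 2 * j + 2 + 1 by ring] at h
      rcases h1 with h1 | h1 <;> rcases H2b j with h2 | h2 <;> rw [h1, h2] at h
      · exact hab' (by linear_combination h)
      · exact hab (by linear_combination h)
      · exact hab (by linear_combination -h)
      · exact hab' (by linear_combination -h)
  have hs1 : ∀ i, σ (u (i + 1)) = u (i + 3) := by
    intro i
    have h1 := H1 i
    have h2 := H1 (i + 1)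
    rw [Sym2.eq_iff] at h1 h2
    rcases h1 with h1 | h1
    · exact h1.2
    rcases h2 with h2 | h2
    · exact h2.1
    exact absurd (h2.1.symm.trans h1.2) (hne (i + 2))
  have hs : ∀ i, σ (u i) = u (i + 2) := by
    intro i
    rcases i with _ | i
    · have h1 := H1 0
      rw [hs1 0] at h1
      exact Sym2.congr_left.1 h1
    · exact hs1 i
  have ue : ∀ i, u (2 * i) = (σ ^ i) (u 0) := by
    intro i
    induction i with
    | zero => simp
    | succ i ih => rw [pow_succ', Equiv.Perm.mul_apply, ← ih, hs]; rfl
  have uo : ∀ i, u (2 * i + 1) = (σ ^ i) (u 1) := by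
    intro i
    induction i with
    | zero => simp
    | succ i ih => rw [pow_succ', Equiv.Perm.mul_apply, ← ih, hs]; rfl
  have ue' : ∀ i, u (2 * i + 2) = (σ ^ i) (σ (u 0)) := by
    intro i
    have := ue (i + 1)
    rw [pow_succ, Equiv.Perm.mul_apply] at this
    exact this
  simp only [ue', ue, uo] at H2a H2b H3a H3b
  by_cases hT : ∃ s t : ℕ, (σ ^ s) (u 0) = (σ ^ t) (u 1)
  swap
  · exfalso
    have disj : ∀ s t : ℕ, (σ ^ s) (u 0) ≠ (σ ^ t) (u 1) := by
      intro s t h; exact hT ⟨s, t, h⟩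
    obtain ⟨i, i1, i2, i3⟩ := invol ha disj H2a H3a
    obtain ⟨j, j1, j2, j3⟩ := invol hb (p := u 1) (q := σ (u 0)) (by
      intro s t h
      apply disj (t + 1) s
      rw [pow_succ, Equiv.Perm.mul_apply, h]) H2b H3b
    have j2' : (σ ^ j) (u 0) ≠ u 0 := by
      intro h
      apply j2
      rw [← Equiv.Perm.mul_apply, ← pow_succ, pow_succ', Equiv.Perm.mul_apply, h]
    have hi : ¬ orderOf σ ∣ i := by
      intro h; apply i2; rw [orderOf_dvd_iff_pow_eq_one.1 h]; rfl
    have hj : ¬ orderOf σ ∣ j := by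
      intro h; apply j2; rw [orderOf_dvd_iff_pow_eq_one.1 h]; rfl
    have hi2 := orderOf_dvd_of_pow_eq_one i3
    have hj2 := orderOf_dvd_of_pow_eq_one j3
    obtain ⟨x, hx⟩ := hi2
    obtain ⟨y, hy⟩ := hj2
    have hxo : ∃ x', x = 2 * x' + 1 := by
      rcases Nat.even_or_odd' x with ⟨x', h | h⟩
      · exact absurd ⟨x', by rw [h] at hx; linarith⟩ hi
      · exact ⟨x', h⟩
    have hyo : ∃ x', y = 2 * x' + 1 := by
      rcases Nat.even_or_odd' y with ⟨x', h | h⟩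
      · exact absurd ⟨x', by rw [h] at hy; linarith⟩ hj
      · exact ⟨x', h⟩
    obtain ⟨x', rfl⟩ := hxo
    obtain ⟨y', rfl⟩ := hyo
    have e : i + orderOf σ * y' = j + orderOf σ * x' := by linarith
    have e2 : σ ^ i = σ ^ j := by
      have := congrArg (fun m => σ ^ m) e
      simpa [pow_add, pow_mul, pow_orderOf_eq_one] using this
    rw [e2] at i1
    exact j2' i1
  obtain ⟨s, t, hst⟩ := hT
  obtain ⟨M, hM⟩ : ∃ M, M = orderOf σ := ⟨_, rfl⟩
  have hM0 : NeZero M := ⟨by rw [hM]; exact (orderOf_pos σ).ne'⟩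
  obtain ⟨g, hg⟩ : ∃ g : ZMod M → ZMod n, g = fun j => (σ ^ j.val) (u 0) := ⟨_, rfl⟩
  have gz : ∀ z : ℤ, g z = (σ ^ z) (u 0) := by
    intro z
    rw [hg]
    simp only
    rw [← zpow_natCast, ZMod.val_intCast, hM, zpow_mod_orderOf]
  have u1 : u 1 = (σ ^ ((s : ℤ) - t)) (u 0) := by
    rw [sub_eq_neg_add, zpow_add, Equiv.Perm.mul_apply, zpow_natCast, hst, zpow_neg, zpow_natCast]
    simp
  obtain ⟨k, hk⟩ : ∃ k : ZMod M, k = (((s : ℤ) - t : ℤ) : ZMod M) := ⟨_, rfl⟩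
  have ge : ∀ i : ℕ, (σ ^ i) (u 0) = g i := by
    intro i
    have := gz i
    rw [zpow_natCast] at this
    rw [← this]; simp
  have go : ∀ i : ℕ, (σ ^ i) (u 1) = g (i + k) := by
    intro i
    have := gz ((i : ℤ) + (s - t))
    rw [zpow_add, Equiv.Perm.mul_apply, ← u1, zpow_natCast] at this
    rw [← this, hk]; congr 1; push_cast; ring
  have ge' : ∀ i : ℕ, (σ ^ i) (σ (u 0)) = g (i + 1) := by
    intro i
    have := ge (i + 1)
    rw [pow_succ, Equiv.Perm.mul_apply] at this
    rw [this]; push_cast; rfl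
  simp only [ge', ge, go] at H2a H2b H3a H3b
  have hsurj : Function.Surjective g := by
    intro x
    obtain ⟨i, hi⟩ := H3a x
    rw [Sym2.eq_iff] at hi
    rcases hi with ⟨h, _⟩ | ⟨h, _⟩
    · exact ⟨_, h.symm⟩
    · exact ⟨_, h.symm⟩
  have hinj : Function.Injective g := by
    intro i j hij
    have hpow : σ ^ i.val = σ ^ j.val := by
      ext1 x
      obtain ⟨m, rfl⟩ := hsurj x
      rw [hg] at hij ⊢
      simp only at hij ⊢
      rw [← Equiv.Perm.mul_apply, ← Equiv.Perm.mul_apply, ← pow_add, ← pow_add,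
        add_comm, add_comm j.val, pow_add, pow_add, Equiv.Perm.mul_apply, hij]
      rfl
    have hi := ZMod.val_lt i
    have hj := ZMod.val_lt j
    apply ZMod.val_injective
    exact pow_injOn_Iio_orderOf (hi.trans_eq hM) (hj.trans_eq hM) hpow
  have hMn : M = n := by
    have := Nat.card_congr (Equiv.ofBijective g ⟨hinj, hsurj⟩)
    simpa using this
  have h2 : (2 : ZMod M) ≠ 0 := by
    intro h
    have h' : ((2 : ℕ) : ZMod M) = 0 := by exact_mod_cast h
    rw [ZMod.natCast_eq_zero_iff] at h'
    have := Nat.le_of_dvd (by norm_num) h'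
    omega
  have cast : ∀ i : ZMod M, ∃ m : ℕ, (m : ZMod M) = i := fun i => ⟨i.val, ZMod.natCast_zmod_val i⟩
  have hA : ∀ i, g (i + k) = g i + a ∨ g (i + k) = g i - a := by
    intro i
    obtain ⟨m, rfl⟩ := cast i
    exact H2a m
  have hB : ∀ i, g (i + (1 - k)) = g i + b ∨ g (i + (1 - k)) = g i - b := by
    intro i
    obtain ⟨m, hm⟩ := cast (i - k)
    have := H2b m
    rw [hm] at this
    rw [show i - k + 1 = i + (1 - k) by ring, sub_add_cancel] at this
    exact this
  refine core h2 ha hb hinj hsurj (k := k) (l := 1 - k) (by ring) ?_ ?_ hA hB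
  · exact kne ha hinj (fun x => by obtain ⟨i, hi⟩ := H3a x; exact ⟨_, hi⟩)
  · refine kne hb hinj (fun x => ?_)
    obtain ⟨i, hi⟩ := H3b x
    refine ⟨i + k, ?_⟩
    rw [hi, show (i : ZMod M) + k + (1 - k) = i + 1 by ring]

lemma typed {n : ℕ} (hn : 5 ≤ n) {a b : ZMod n} (ha : a + a ≠ 0) (hb : b + b ≠ 0)
    (hab : a ≠ b) (hab' : a ≠ -b) (σ : Equiv.Perm (ZMod n)) (u : ℕ → ZMod n)
    (H1 : ∀ i, s(σ (u i), σ (u (i + 1))) = s(u (i + 2), u (i + 3)))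
    (R : Sym2 (ZMod n) → Sym2 (ZMod n) → Prop) (Rs : ∀ e e', R e e' → R e' e)
    (Rt : ∀ e e' e'', R e e' → R e' e'' → R e e'')
    (RA : ∀ x y, R s(x, x + a) s(y, y + a)) (RB : ∀ x y, R s(x, x + b) s(y, y + b))
    (Re : ∀ i, R s(u 0, u 1) s(u (2 * i), u (2 * i + 1)))
    (Ro : ∀ i, R s(u 1, u 2) s(u (2 * i + 1), u (2 * i + 2)))
    (R01 : ¬ R s(u 0, u 1) s(u 1, u 2))
    (ty : ∀ i, (∃ x, s(u i, u (i + 1)) = s(x, x + a)) ∨ (∃ x, s(u i, u (i + 1)) = s(x, x + b)))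
    (cov : ∀ x, (∃ i, s(x, x + a) = s(u i, u (i + 1))) ∧ (∃ i, s(x, x + b) = s(u i, u (i + 1))))
    (h0 : ∃ x, s(u 0, u 1) = s(x, x + a)) :
    addOrderOf (a + b) = n ∨ addOrderOf (a - b) = n := by
  obtain ⟨x0, h0⟩ := h0
  have h1 : ∃ x, s(u 1, u 2) = s(x, x + b) := by
    rcases ty 1 with ⟨x, h⟩ | h
    · exact absurd (by rw [h0, h]; exact RA _ _) R01
    · exact h
  obtain ⟨x1, h1⟩ := h1
  have pm : ∀ {p q x c : ZMod n}, s(p, q) = s(x, x + c) → q = p + c ∨ q = p - c := by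
    intro p q x c h
    rw [Sym2.eq_iff] at h
    rcases h with ⟨h, h'⟩ | ⟨h, h'⟩
    · left; rw [h', h]
    · right; rw [h', h]; ring
  refine mid hn ha hb hab hab' σ u H1 ?_ ?_ ?_ ?_
  · intro i
    rcases ty (2 * i) with ⟨x, h⟩ | ⟨x, h⟩
    · exact pm h
    · refine absurd (Rt _ _ _ (Re i) ?_) R01
      rw [h, h1]; exact RB _ _
  · intro i
    rcases ty (2 * i + 1) with ⟨x, h⟩ | ⟨x, h⟩
    · refine absurd (Rs _ _ (Rt _ _ _ (Ro i) ?_)) R01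
      rw [h, h0]; exact RA _ _
    · exact pm h
  · intro x
    obtain ⟨i, hi⟩ := (cov x).1
    rcases Nat.even_or_odd' i with ⟨j, rfl | rfl⟩
    · exact ⟨j, hi⟩
    · refine absurd (Rs _ _ (Rt _ _ _ (Ro j) ?_)) R01
      rw [show 2 * j + 2 = 2 * j + 1 + 1 by rfl, ← hi, h0]; exact RA _ _
  · intro x
    obtain ⟨i, hi⟩ := (cov x).2
    rcases Nat.even_or_odd' i with ⟨j, rfl | rfl⟩
    · refine absurd (Rt _ _ _ (Re j) ?_) R01
      rw [← hi, h1]; exact RB _ _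
    · exact ⟨j, hi⟩

lemma circ_adj_s7 {n : ℕ} (a b i j : ZMod n) : (circGraph n a b).Adj i j ↔
    i ≠ j ∧ ((j - i = a ∨ j - i = b) ∨ (i - j = a ∨ i - j = b)) := by
  simp [circGraph, SimpleGraph.fromRel_adj]

/-- translation automorphism -/
def transl {n : ℕ} (a b c : ZMod n) : circGraph n a b ≃g circGraph n a b where
  toEquiv := Equiv.addRight c
  map_rel_iff' := by
    intro i j
    simp [circ_adj_s7]

theorem stmt7 (n : ℕ) (hn : 5 ≤ n) (a b : ZMod n)
    (ha : a ≠ 0) (hb : b ≠ 0) (hdist : ([a, -a, b, -b] : List (ZMod n)).Nodup)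
    (hgen : AddSubgroup.closure {a, b} = (⊤ : AddSubgroup (ZMod n)))
    (hnotet : ¬ (∀ e ∈ (circGraph n a b).edgeSet, ∀ e' ∈ (circGraph n a b).edgeSet,
      ∃ τ : circGraph n a b ≃g circGraph n a b, Sym2.map ⇑τ e = e'))
    (v : ZMod n) (p : (circGraph n a b).Walk v v) (hp : p.IsEulerian)
    (σ : circGraph n a b ≃g circGraph n a b)
    (hσ : ∀ i : Fin p.edges.length,
      Sym2.map ⇑σ (p.edges.get i) =
        p.edges.get ⟨((i : ℕ) + 2) % p.edges.length, Nat.mod_lt _ i.pos⟩) :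
    addOrderOf (a + b) = n ∨ addOrderOf (a - b) = n := by
  simp only [List.nodup_cons, List.mem_cons, List.not_mem_nil, or_false, not_or,
    List.nodup_nil, and_true, not_false_iff] at hdist
  obtain ⟨⟨d1, d2, d3⟩, -, d4⟩ := hdist
  have ha2 : a + a ≠ 0 := fun h => d1 (by linear_combination h)
  have hb2 : b + b ≠ 0 := fun h => d4 (by linear_combination h)
  have eA : ∀ x, s(x, x + a) ∈ (circGraph n a b).edgeSet := by
    intro x
    rw [SimpleGraph.mem_edgeSet, circ_adj_s7]
    refine ⟨fun h => ha (by linear_combination -h), Or.inl (Or.inl (by ring))⟩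
  have eB : ∀ x, s(x, x + b) ∈ (circGraph n a b).edgeSet := by
    intro x
    rw [SimpleGraph.mem_edgeSet, circ_adj_s7]
    refine ⟨fun h => hb (by linear_combination -h), Or.inl (Or.inr (by ring))⟩
  have hl : p.edges.length = p.length := p.length_edges
  obtain ⟨L, hL⟩ : ∃ L, L = p.edges.length := ⟨_, rfl⟩
  have hL0 : 0 < L := by
    rw [hL]
    exact List.length_pos_of_mem (hp.mem_edges_iff.2 (eA 0))
  obtain ⟨u, hu⟩ : ∃ u : ℕ → ZMod n, u = fun i => p.getVert (i % L) := ⟨_, rfl⟩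
  have hE : ∀ i, s(u i, u (i + 1)) =
      p.edges.get ⟨i % L, by rw [← hL]; exact Nat.mod_lt _ hL0⟩ := by
    intro i
    have hr : i % L < L := Nat.mod_lt _ hL0
    have h1 : u (i + 1) = p.getVert (i % L + 1) := by
      rw [hu]
      simp only
      rw [← Nat.mod_add_mod]
      by_cases h : i % L + 1 = L
      · rw [h, Nat.mod_self, p.getVert_zero, hL, hl, p.getVert_length]
      · rw [Nat.mod_eq_of_lt (show i % L + 1 < L by omega)]
    rw [h1, hu]
    simp only [List.get_eq_getElem, SimpleGraph.Walk.edges, List.getElem_map]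
    rw [SimpleGraph.Walk.darts_getElem_eq_getVert]
    rfl
  have H1 : ∀ i, Sym2.map σ s(u i, u (i + 1)) = s(u (i + 2), u (i + 3)) := by
    intro i
    rw [hE i, hE (i + 2), hσ]
    congr 2
    simp [← hL]
  have hmem : ∀ i, s(u i, u (i + 1)) ∈ (circGraph n a b).edgeSet := by
    intro i
    rw [hE]
    exact p.edges_subset_edgeSet (List.get_mem _ _)
  have hcov : ∀ e ∈ (circGraph n a b).edgeSet, ∃ i, e = s(u i, u (i + 1)) := by
    intro e he
    obtain ⟨i, hi⟩ := List.get_of_mem (hp.mem_edges_iff.2 he)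
    refine ⟨i, ?_⟩
    rw [hE, ← hi]
    congr 1
    exact Fin.ext (Nat.mod_eq_of_lt (i.2.trans_eq hL.symm)).symm
  have ty : ∀ e ∈ (circGraph n a b).edgeSet,
      (∃ x, e = s(x, x + a)) ∨ (∃ x, e = s(x, x + b)) := by
    intro e
    induction e using Sym2.ind with
    | _ i j =>
      rw [SimpleGraph.mem_edgeSet, circ_adj_s7]
      rintro ⟨-, (h | h) | (h | h)⟩
      · left; exact ⟨i, by rw [← h]; simp⟩
      · right; exact ⟨i, by rw [← h]; simp⟩
      · left; exact ⟨j, by rw [← h, Sym2.eq_swap]; simp⟩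
      · right; exact ⟨j, by rw [← h, Sym2.eq_swap]; simp⟩
  obtain ⟨R, hR⟩ : ∃ R : Sym2 (ZMod n) → Sym2 (ZMod n) → Prop, R = fun e e' =>
    ∃ τ : circGraph n a b ≃g circGraph n a b, Sym2.map ⇑τ e = e' := ⟨_, rfl⟩
  have Rr : ∀ e, R e e := by
    intro e; rw [hR]; exact ⟨SimpleGraph.Iso.refl, by simp⟩
  have Rs : ∀ e e', R e e' → R e' e := by
    intro e e'
    rw [hR]
    rintro ⟨τ, rfl⟩
    refine ⟨τ.symm, ?_⟩
    rw [Sym2.map_map]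
    have : (⇑τ.symm ∘ ⇑τ) = id := by ext1 x; simp
    rw [this, Sym2.map_id]; rfl
  have Rt : ∀ e e' e'', R e e' → R e' e'' → R e e'' := by
    intro e e' e''
    rw [hR]
    rintro ⟨τ, rfl⟩ ⟨ρ, rfl⟩
    refine ⟨τ.trans ρ, ?_⟩
    rw [Sym2.map_map]
    rfl
  have RT : ∀ c x y, R s(x, x + c) s(y, y + c) := by
    intro c x y
    rw [hR]
    refine ⟨transl a b (y - x), ?_⟩
    have h : ∀ z, (transl a b (y - x)) z = z + (y - x) := fun z => rfl
    rw [Sym2.map_mk, h, h]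
    congr 1 <;> ring
  have Rσ : ∀ i, R s(u i, u (i + 1)) s(u (i + 2), u (i + 3)) := by
    intro i; rw [hR]; exact ⟨σ, H1 i⟩
  have Re : ∀ i, R s(u 0, u 1) s(u (2 * i), u (2 * i + 1)) := by
    intro i
    induction i with
    | zero => exact Rr _
    | succ i ih => exact Rt _ _ _ ih (Rσ _)
  have Ro : ∀ i, R s(u 1, u 2) s(u (2 * i + 1), u (2 * i + 2)) := by
    intro i
    induction i with
    | zero => exact Rr _
    | succ i ih => exact Rt _ _ _ ih (Rσ _)
  have R01 : ¬ R s(u 0, u 1) s(u 1, u 2) := by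
    intro h
    apply hnotet
    have all : ∀ e ∈ (circGraph n a b).edgeSet, R s(u 0, u 1) e := by
      intro e he
      obtain ⟨i, rfl⟩ := hcov e he
      rcases Nat.even_or_odd' i with ⟨j, rfl | rfl⟩
      · exact Re j
      · exact Rt _ _ _ h (Ro j)
    intro e he e' he'
    have := Rt _ _ _ (Rs _ _ (all e he)) (all e' he')
    rw [hR] at this
    exact this
  have H1' : ∀ i, s(σ.toEquiv (u i), σ.toEquiv (u (i + 1))) = s(u (i + 2), u (i + 3)) := H1
  rcases ty _ (hmem 0) with h0 | h0
  · exact typed hn ha2 hb2 d2 d3 σ.toEquiv u H1' R Rs Rt (RT a) (RT b) Re Ro R01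
      (fun i => ty _ (hmem i)) (fun x => ⟨hcov _ (eA x), hcov _ (eB x)⟩) h0
  · have := typed hn hb2 ha2 (Ne.symm d2) (fun h => d3 (by rw [h, neg_neg])) σ.toEquiv u H1' R Rs Rt
      (RT b) (RT a) Re Ro R01
      (fun i => (ty _ (hmem i)).symm) (fun x => ⟨hcov _ (eB x), hcov _ (eA x)⟩) h0
    rwa [add_comm b a, ← addOrderOf_neg (b - a), neg_sub] at this
end

section
/- Let r, s, t ≥ 1 and define the permutation σ of Fin r × ZMod s × ZMod t by σ(k, i, j) = (k+1, i, j) when k + 1 < r, and σ(r−1, i, j) = (0, i+1, j+1). Then the order of σ equals r · Nat.lcm s t; in particular, the cyclic group generated by σ acts transitively on Fin r × ZMod s × ZMod t if and only if Nat.gcd s t = 1. -/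
theorem stmt8 (r s t : ℕ) (hr : 1 ≤ r) (hs : 1 ≤ s) (ht : 1 ≤ t)
    (σ : Equiv.Perm (Fin r × ZMod s × ZMod t))
    (hσ : ∀ (k : Fin r) (i : ZMod s) (j : ZMod t),
      (∀ h : (k : ℕ) + 1 < r, σ (k, i, j) = (⟨(k : ℕ) + 1, h⟩, i, j)) ∧
      ((k : ℕ) + 1 = r → σ (k, i, j) = (⟨0, hr⟩, i + 1, j + 1))) :
    orderOf σ = r * Nat.lcm s t ∧
    ((∀ x y : Fin r × ZMod s × ZMod t, ∃ m : ℤ, (σ ^ m) x = y) ↔ Nat.gcd s t = 1) := by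
  have : NeZero s := ⟨by omega⟩
  have : NeZero t := ⟨by omega⟩
  have hr0 : 0 < r := hr
  have key : ∀ (n : ℕ) (k : Fin r) (i : ZMod s) (j : ZMod t),
      (σ ^ n) (k, i, j) = (⟨((k : ℕ) + n) % r, Nat.mod_lt _ hr0⟩,
        i + (((k : ℕ) + n) / r : ℕ), j + (((k : ℕ) + n) / r : ℕ)) := by
    intro n
    induction n with
    | zero =>
      intro k i j
      simp [Nat.mod_eq_of_lt k.2, Nat.div_eq_of_lt k.2]
    | succ n ih =>
      intro k i j
      rw [pow_succ', Equiv.Perm.mul_apply, ih]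
      have hlt := Nat.mod_lt ((k : ℕ) + n) hr0
      have hdm := Nat.div_add_mod ((k : ℕ) + n) r
      set q := ((k : ℕ) + n) / r with hq
      set e := ((k : ℕ) + n) % r with he
      by_cases h : e + 1 < r
      · rw [(hσ _ _ _).1 h]
        have e1 : (k : ℕ) + (n + 1) = (e + 1) + r * q := by omega
        have h1 : ((k : ℕ) + (n + 1)) % r = e + 1 := by
          rw [e1, Nat.add_mul_mod_self_left, Nat.mod_eq_of_lt h]
        have h2 : ((k : ℕ) + (n + 1)) / r = q := by
          rw [e1, Nat.add_mul_div_left _ _ hr0, Nat.div_eq_of_lt h, zero_add]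
        simp only [h1, h2, he]
      · have h' : e + 1 = r := by omega
        rw [(hσ _ _ _).2 h']
        have e1 : (k : ℕ) + (n + 1) = r * (q + 1) := by rw [mul_add]; omega
        have h1 : ((k : ℕ) + (n + 1)) % r = 0 := by
          rw [e1, Nat.mul_mod_right]
        have h2 : ((k : ℕ) + (n + 1)) / r = q + 1 := by
          rw [e1, Nat.mul_div_cancel_left _ hr0]
        simp only [h1, h2, Nat.cast_add, Nat.cast_one, add_assoc]
  refine ⟨?_, ?_, ?_⟩
  · apply Nat.dvd_antisymm
    · rw [orderOf_dvd_iff_pow_eq_one]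
      ext1 ⟨k, i, j⟩
      rw [key, Equiv.Perm.one_apply]
      have h1 : ((k : ℕ) + r * Nat.lcm s t) % r = k := by
        rw [Nat.add_mul_mod_self_left, Nat.mod_eq_of_lt k.2]
      have h2 : ((k : ℕ) + r * Nat.lcm s t) / r = Nat.lcm s t := by
        rw [Nat.add_mul_div_left _ _ hr0, Nat.div_eq_of_lt k.2, zero_add]
      have h3 : ((Nat.lcm s t : ℕ) : ZMod s) = 0 :=
        (ZMod.natCast_eq_zero_iff _ _).2 (Nat.dvd_lcm_left s t)
      have h4 : ((Nat.lcm s t : ℕ) : ZMod t) = 0 :=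
        (ZMod.natCast_eq_zero_iff _ _).2 (Nat.dvd_lcm_right s t)
      simp only [h1, h2, h3, h4, add_zero]
    · have h := key (orderOf σ) ⟨0, hr⟩ 0 0
      rw [pow_orderOf_eq_one, Equiv.Perm.one_apply] at h
      simp only [Prod.mk.injEq, Fin.mk.injEq, zero_add] at h
      obtain ⟨h1, h2, h3⟩ := h
      have h2' := (ZMod.natCast_eq_zero_iff _ _).1 h2.symm
      have h3' := (ZMod.natCast_eq_zero_iff _ _).1 h3.symm
      have hd : r ∣ orderOf σ := Nat.dvd_of_mod_eq_zero h1.symm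
      rw [← Nat.mul_div_cancel' hd]
      exact Nat.mul_dvd_mul_left _ (Nat.lcm_dvd h2' h3')
  · intro H
    obtain ⟨m, hm⟩ := H (⟨0, hr⟩, 0, 0) (⟨0, hr⟩, 1, 0)
    have : σ ^ m ∈ Submonoid.powers σ :=
      mem_powers_iff_mem_zpowers.2 ⟨m, rfl⟩
    obtain ⟨n, hn⟩ := this
    have hn' : σ ^ n = σ ^ m := hn
    rw [← hn', key] at hm
    simp only [Prod.mk.injEq, Fin.mk.injEq, zero_add] at hm
    obtain ⟨-, h2, h3⟩ := hm
    have h3' := (ZMod.natCast_eq_zero_iff _ _).1 h3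
    have h2' : (n / r) ≡ 1 [MOD s] := by
      rw [← ZMod.natCast_eq_natCast_iff]; simpa using h2
    have h4 := h2'.of_dvd (Nat.gcd_dvd_left s t)
    have h5 := (Nat.gcd_dvd_right s t).trans h3'
    exact Nat.dvd_one.1 ((h4.dvd_iff dvd_rfl).1 h5)
  · rintro H ⟨k, i, j⟩ ⟨k', i', j'⟩
    obtain ⟨q, hq1, hq2⟩ := Nat.chineseRemainder (n := s) (m := t) H (i' - i).val (j' - j).val
    rw [← ZMod.natCast_eq_natCast_iff] at hq1 hq2
    rw [ZMod.natCast_zmod_val] at hq1 hq2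
    have hst : 1 ≤ s * t := Nat.mul_pos hs ht
    have hle : r ≤ r * (q + s * t) := Nat.le_mul_of_pos_right _ (by omega)
    refine ⟨((k' + r * (q + s * t) - k : ℕ) : ℤ), ?_⟩
    rw [zpow_natCast, key]
    have e1 : (k : ℕ) + (k' + r * (q + s * t) - k) = k' + r * (q + s * t) := by
      have := k.2
      omega
    have h1 : ((k' : ℕ) + r * (q + s * t)) % r = k' := by
      rw [Nat.add_mul_mod_self_left, Nat.mod_eq_of_lt k'.2]
    have h2 : ((k' : ℕ) + r * (q + s * t)) / r = q + s * t := by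
      rw [Nat.add_mul_div_left _ _ hr0, Nat.div_eq_of_lt k'.2, zero_add]
    simp only [e1, h1, h2]
    simp [hq1, hq2]
end

section
/- Let r ≥ 2 and s, t ≥ 1 with s·t > 1 and Nat.gcd s t = 1, and let Γ = C_{2r}[sK_1,tK_1]. Then Γ is connected, and there exists an automorphism g of Γ of order r·s·t such that the cyclic group generated by g has exactly two orbits on the vertex set, namely the two summands (ZMod r × ZMod s) and (ZMod r × ZMod t), and acts freely on the edge set of Γ with exactly two orbits; moreover, the automorphism group of Γ contains a subgroup isomorphic to the dihedral group of order 2·r·s·t that acts regularly (transitively and freely) on the edge set of Γ. -/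
/-- The graph `C_{2r}[sK_1, tK_1]`: vertex set `(ZMod r × ZMod s) ⊕ (ZMod r × ZMod t)`,
with `inl (k, i)` adjacent to `inr (k', j)` iff `k' = k` or `k' = k - 1`. -/
def blowupCycle (r s t : ℕ) : SimpleGraph ((ZMod r × ZMod s) ⊕ (ZMod r × ZMod t)) :=
  SimpleGraph.fromRel (fun v w => ∃ (k : ZMod r) (i : ZMod s) (k' : ZMod r) (j : ZMod t),
    v = Sum.inl (k, i) ∧ w = Sum.inr (k', j) ∧ (k' = k ∨ k' = k - 1))

/-! Helper material: the model of the graph on `ZMod (r * s) ⊕ ZMod (r * t)`. -/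

theorem bc_adj (r s t : ℕ) (p : ZMod r × ZMod s) (q : ZMod r × ZMod t) :
    (blowupCycle r s t).Adj (Sum.inl p) (Sum.inr q) ↔ (q.1 = p.1 ∨ q.1 = p.1 - 1) := by
  obtain ⟨a, b⟩ := p
  obtain ⟨c, d⟩ := q
  simp [blowupCycle, SimpleGraph.fromRel_adj]

theorem bc_not_ll (r s t : ℕ) (p q : ZMod r × ZMod s) :
    ¬ (blowupCycle r s t).Adj (Sum.inl p) (Sum.inl q) := by
  simp [blowupCycle, SimpleGraph.fromRel_adj]

theorem bc_not_rr (r s t : ℕ) (p q : ZMod r × ZMod t) :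
    ¬ (blowupCycle r s t).Adj (Sum.inr p) (Sum.inr q) := by
  simp [blowupCycle, SimpleGraph.fromRel_adj]

theorem bc_connected (r s t : ℕ) [NeZero r] : (blowupCycle r s t).Connected := by
  have key : ∀ (m : ℕ) (i : ZMod s),
      (blowupCycle r s t).Reachable (Sum.inl (0, 0)) (Sum.inl ((m : ZMod r), i)) := by
    intro m
    induction m with
    | zero =>
      intro i
      have h1 : (blowupCycle r s t).Adj (Sum.inl (0, 0)) (Sum.inr (0, 0)) := by
        rw [bc_adj]; simp
      have h2 : (blowupCycle r s t).Adj (Sum.inl (((0 : ℕ) : ZMod r), i)) (Sum.inr (0, 0)) := by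
        rw [bc_adj]; simp
      exact h1.reachable.trans h2.symm.reachable
    | succ m ih =>
      intro i
      have h1 : (blowupCycle r s t).Adj (Sum.inl ((m : ZMod r), 0)) (Sum.inr ((m : ZMod r), 0)) := by
        rw [bc_adj]; simp
      have h2 : (blowupCycle r s t).Adj (Sum.inl (((m + 1 : ℕ) : ZMod r), i))
          (Sum.inr ((m : ZMod r), 0)) := by
        rw [bc_adj]; simp
      exact ((ih 0).trans h1.reachable).trans h2.symm.reachable
  have key2 : ∀ v, (blowupCycle r s t).Reachable (Sum.inl (0, 0)) v := by
    rintro (⟨k, i⟩ | ⟨k, j⟩)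
    · have := key k.val i
      rwa [ZMod.natCast_zmod_val] at this
    · have := key k.val 0
      rw [ZMod.natCast_zmod_val] at this
      have h1 : (blowupCycle r s t).Adj (Sum.inl (k, 0)) (Sum.inr (k, j)) := by
        rw [bc_adj]; simp
      exact this.trans h1.reachable
  exact { preconnected := fun u v => (key2 u).symm.trans (key2 v), nonempty := ⟨Sum.inl (0, 0)⟩ }

/-- The reduction map. -/
abbrev bcRed (m n : ℕ) (h : m ∣ n) : ZMod n →+* ZMod m := ZMod.castHom h (ZMod m)

theorem bc_equiv (r s : ℕ) [NeZero r] [NeZero s] :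
    ∃ φ : ZMod (r * s) ≃ ZMod r × ZMod s, ∀ x, (φ x).1 = bcRed r (r * s) (dvd_mul_right r s) x := by
  let f : ZMod (r * s) → ZMod r × ZMod s := fun x =>
    (bcRed r (r * s) (dvd_mul_right r s) x, ((x.val / r : ℕ) : ZMod s))
  have hinj : Function.Injective f := by
    intro x y hxy
    have h1 : bcRed r (r * s) (dvd_mul_right r s) x = bcRed r (r * s) (dvd_mul_right r s) y :=
      congrArg Prod.fst hxy
    have h2 : ((x.val / r : ℕ) : ZMod s) = ((y.val / r : ℕ) : ZMod s) := congrArg Prod.snd hxy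
    rw [← ZMod.natCast_zmod_val x, ← ZMod.natCast_zmod_val y, map_natCast, map_natCast,
      ZMod.natCast_eq_natCast_iff'] at h1
    rw [ZMod.natCast_eq_natCast_iff'] at h2
    have hx : x.val / r < s := Nat.div_lt_of_lt_mul (ZMod.val_lt x)
    have hy : y.val / r < s := Nat.div_lt_of_lt_mul (ZMod.val_lt y)
    rw [Nat.mod_eq_of_lt hx, Nat.mod_eq_of_lt hy] at h2
    apply ZMod.val_injective
    rw [← Nat.div_add_mod x.val r, ← Nat.div_add_mod y.val r, h1, h2]
  have hbij : Function.Bijective f := by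
    rw [Fintype.bijective_iff_injective_and_card]
    refine ⟨hinj, ?_⟩
    simp [ZMod.card]
  exact ⟨Equiv.ofBijective f hbij, fun x => rfl⟩

theorem bc_dvd1 (r s t : ℕ) : r * s ∣ r * s * t := dvd_mul_right _ _
theorem bc_dvd2 (r s t : ℕ) : r * t ∣ r * s * t := ⟨s, by ring⟩

theorem bc_crt (r s t : ℕ) [NeZero r] [NeZero s] [NeZero t] (hgcd : Nat.gcd s t = 1)
    (a : ZMod (r * s)) (b : ZMod (r * t))
    (h : bcRed r (r * s) (dvd_mul_right r s) a = bcRed r (r * t) (dvd_mul_right r t) b) :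
    ∃ c : ZMod (r * s * t), bcRed _ _ (bc_dvd1 r s t) c = a ∧ bcRed _ _ (bc_dvd2 r s t) c = b := by
  rw [← ZMod.natCast_zmod_val a, ← ZMod.natCast_zmod_val b, map_natCast, map_natCast,
    ZMod.natCast_eq_natCast_iff] at h
  have h' : a.val ≡ b.val [MOD Nat.gcd (r * s) (r * t)] := by
    rw [Nat.gcd_mul_left, hgcd, mul_one]; exact h
  obtain ⟨c, hc1, hc2⟩ := Nat.chineseRemainder' h'
  refine ⟨(c : ZMod (r * s * t)), ?_, ?_⟩
  · rw [map_natCast, ← ZMod.natCast_zmod_val a, ZMod.natCast_eq_natCast_iff]; exact hc1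
  · rw [map_natCast, ← ZMod.natCast_zmod_val b, ZMod.natCast_eq_natCast_iff]; exact hc2

theorem bc_crt_inj (r s t : ℕ) [NeZero r] [NeZero s] [NeZero t] (hgcd : Nat.gcd s t = 1)
    (c d : ZMod (r * s * t)) (h1 : bcRed _ _ (bc_dvd1 r s t) c = bcRed _ _ (bc_dvd1 r s t) d)
    (h2 : bcRed _ _ (bc_dvd2 r s t) c = bcRed _ _ (bc_dvd2 r s t) d) : c = d := by
  rw [← ZMod.natCast_zmod_val c, ← ZMod.natCast_zmod_val d] at h1 h2 ⊢
  rw [map_natCast, map_natCast, ZMod.natCast_eq_natCast_iff] at h1 h2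
  rw [ZMod.natCast_eq_natCast_iff]
  have h3 : c.val ≡ d.val [MOD Nat.lcm (r * s) (r * t)] := by
    rw [Nat.modEq_iff_dvd] at h1 h2 ⊢
    have h4 := Int.coe_lcm_dvd h1 h2
    exact h4
  rw [Nat.lcm_mul_left, Nat.Coprime.lcm_eq_mul hgcd, ← mul_assoc] at h3
  exact h3

/-- Dihedral action on the model. -/
def bcAct (r s t : ℕ) : DihedralGroup (r * s * t) →
    ZMod (r * s) ⊕ ZMod (r * t) → ZMod (r * s) ⊕ ZMod (r * t)
  | .r i, .inl a => .inl (a + bcRed _ _ (bc_dvd1 r s t) i)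
  | .r i, .inr b => .inr (b + bcRed _ _ (bc_dvd2 r s t) i)
  | .sr i, .inl a => .inl (-(a + bcRed _ _ (bc_dvd1 r s t) i))
  | .sr i, .inr b => .inr (-1 - (b + bcRed _ _ (bc_dvd2 r s t) i))

theorem bcAct_one (r s t : ℕ) (v) : bcAct r s t 1 v = v := by
  rw [DihedralGroup.one_def]
  rcases v with a | b <;> simp only [bcAct, map_zero, add_zero]

theorem bcAct_mul (r s t : ℕ) (g h) (v) :
    bcAct r s t (g * h) v = bcAct r s t g (bcAct r s t h v) := by
  rcases g with i | i <;> rcases h with j | j <;> rcases v with a | b <;>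
    simp only [bcAct, DihedralGroup.r_mul_r, DihedralGroup.r_mul_sr, DihedralGroup.sr_mul_r,
      DihedralGroup.sr_mul_sr, map_add, map_sub] <;> congr 1 <;> ring

/-- adjacency in the model -/
def bcRel (r s t : ℕ) (a : ZMod (r * s)) (b : ZMod (r * t)) : Prop :=
  bcRed r (r * t) (dvd_mul_right r t) b = bcRed r (r * s) (dvd_mul_right r s) a ∨
  bcRed r (r * t) (dvd_mul_right r t) b = bcRed r (r * s) (dvd_mul_right r s) a - 1

theorem bcRed_comp (r s t : ℕ) (i : ZMod (r * s * t)) :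
    bcRed r (r * t) (dvd_mul_right r t) (bcRed _ _ (bc_dvd2 r s t) i) =
    bcRed r (r * s) (dvd_mul_right r s) (bcRed _ _ (bc_dvd1 r s t) i) := by
  have : (bcRed r (r * t) (dvd_mul_right r t)).comp (bcRed _ _ (bc_dvd2 r s t)) =
    (bcRed r (r * s) (dvd_mul_right r s)).comp (bcRed _ _ (bc_dvd1 r s t)) := Subsingleton.elim _ _
  exact DFunLike.congr_fun this i

theorem bcRel_r (r s t : ℕ) (i : ZMod (r * s * t)) (a b) (h : bcRel r s t a b) :
    bcRel r s t (a + bcRed _ _ (bc_dvd1 r s t) i) (b + bcRed _ _ (bc_dvd2 r s t) i) := by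
  unfold bcRel at *
  rw [map_add, map_add, bcRed_comp]
  rcases h with h | h <;> rw [h]
  · left; rfl
  · right; ring

theorem bcRel_sr (r s t : ℕ) (i : ZMod (r * s * t)) (a b) (h : bcRel r s t a b) :
    bcRel r s t (-(a + bcRed _ _ (bc_dvd1 r s t) i)) (-1 - (b + bcRed _ _ (bc_dvd2 r s t) i)) := by
  unfold bcRel at *
  rw [map_neg, map_sub, map_neg, map_one, map_add, map_add, bcRed_comp]
  rcases h with h | h <;> rw [h]
  · right; ring
  · left; ring

theorem bc_exists_hom (r s t : ℕ) [NeZero r] [NeZero s] [NeZero t] :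
    ∃ (E : ZMod (r * s) ⊕ ZMod (r * t) ≃ (ZMod r × ZMod s) ⊕ (ZMod r × ZMod t))
      (ρ : DihedralGroup (r * s * t) →* (blowupCycle r s t ≃g blowupCycle r s t)),
      (∀ p, ∃ a, E (Sum.inl a) = Sum.inl p) ∧ (∀ q, ∃ b, E (Sum.inr b) = Sum.inr q) ∧
      (∀ a, ∃ p, E (Sum.inl a) = Sum.inl p) ∧ (∀ b, ∃ q, E (Sum.inr b) = Sum.inr q) ∧
      (∀ a b, (blowupCycle r s t).Adj (E (Sum.inl a)) (E (Sum.inr b)) ↔ bcRel r s t a b) ∧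
      (∀ d v, ρ d (E v) = E (bcAct r s t d v)) := by
  obtain ⟨φ, hφ⟩ := bc_equiv r s
  obtain ⟨ψ, hψ⟩ := bc_equiv r t
  have hadj : ∀ a b, (blowupCycle r s t).Adj (Equiv.sumCongr φ ψ (Sum.inl a))
      (Equiv.sumCongr φ ψ (Sum.inr b)) ↔ bcRel r s t a b := by
    intro a b
    simp only [Equiv.sumCongr_apply, Sum.map_inl, Sum.map_inr]
    rw [bc_adj, hφ, hψ]; rfl
  have hll : ∀ a b, ¬ (blowupCycle r s t).Adj (Equiv.sumCongr φ ψ (Sum.inl a))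
      (Equiv.sumCongr φ ψ (Sum.inl b)) := fun a b => bc_not_ll r s t _ _
  have hrr : ∀ a b, ¬ (blowupCycle r s t).Adj (Equiv.sumCongr φ ψ (Sum.inr a))
      (Equiv.sumCongr φ ψ (Sum.inr b)) := fun a b => bc_not_rr r s t _ _
  have h1E : ∀ p, ∃ a, Equiv.sumCongr φ ψ (Sum.inl a) = Sum.inl p := fun p => ⟨φ.symm p, by simp⟩
  have h2E : ∀ p, ∃ a, Equiv.sumCongr φ ψ (Sum.inr a) = Sum.inr p := fun p => ⟨ψ.symm p, by simp⟩
  have h3E : ∀ a, ∃ p, Equiv.sumCongr φ ψ (Sum.inl a) = Sum.inl p := fun a => ⟨φ a, by simp⟩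
  have h4E : ∀ a, ∃ p, Equiv.sumCongr φ ψ (Sum.inr a) = Sum.inr p := fun a => ⟨ψ a, by simp⟩
  generalize Equiv.sumCongr φ ψ = E at *
  have hpres : ∀ d v w, (blowupCycle r s t).Adj (E v) (E w) →
      (blowupCycle r s t).Adj (E (bcAct r s t d v)) (E (bcAct r s t d w)) := by
    intro d v w h
    rcases v with a | a <;> rcases w with b | b
    · exact absurd h (hll _ _)
    · rw [hadj] at h
      rcases d with i | i
      · exact (hadj _ _).2 (bcRel_r r s t i a b h)
      · exact (hadj _ _).2 (bcRel_sr r s t i a b h)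
    · replace h := h.symm
      rw [hadj] at h
      refine SimpleGraph.Adj.symm ?_
      rcases d with i | i
      · exact (hadj _ _).2 (bcRel_r r s t i b a h)
      · exact (hadj _ _).2 (bcRel_sr r s t i b a h)
    · exact absurd h (hrr _ _)
  let A : DihedralGroup (r * s * t) → (blowupCycle r s t ≃g blowupCycle r s t) := fun d =>
    { toFun := fun v => E (bcAct r s t d (E.symm v))
      invFun := fun v => E (bcAct r s t d⁻¹ (E.symm v))
      left_inv := by
        intro v
        simp [← bcAct_mul, bcAct_one]
      right_inv := by
        intro v
        simp [← bcAct_mul, bcAct_one]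
      map_rel_iff' := by
        intro v w
        constructor
        · intro h
          have := hpres d⁻¹ _ _ h
          simpa [← bcAct_mul, bcAct_one] using this
        · intro h
          have := hpres d (E.symm v) (E.symm w) (by simpa using h)
          exact this }
  have hA : ∀ d v, A d v = E (bcAct r s t d (E.symm v)) := fun d v => rfl
  refine ⟨E, { toFun := A, map_one' := ?_, map_mul' := ?_ }, h1E, h2E, h3E, h4E, hadj, ?_⟩
  · apply RelIso.ext
    intro v
    rw [hA, bcAct_one]; simp
  · intro g h
    apply RelIso.ext
    intro v
    rw [RelIso.mul_apply, hA, hA, hA, bcAct_mul]; simp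
  · intro d v
    change A d (E v) = _
    rw [hA]; simp

theorem stmt9 (r s t : ℕ) (hr : 2 ≤ r) (hs : 1 ≤ s) (ht : 1 ≤ t) (hst : 1 < s * t)
    (hgcd : Nat.gcd s t = 1) :
    (blowupCycle r s t).Connected ∧
    (∃ g : blowupCycle r s t ≃g blowupCycle r s t,
      orderOf g = r * s * t ∧
      -- the vertex orbits of `⟨g⟩` are exactly the two summands
      (∀ v : ZMod r × ZMod s,
        {w : (ZMod r × ZMod s) ⊕ (ZMod r × ZMod t) | ∃ k : ℤ, (g ^ k) (Sum.inl v) = w} =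
          Set.range Sum.inl) ∧
      (∀ v : ZMod r × ZMod t,
        {w : (ZMod r × ZMod s) ⊕ (ZMod r × ZMod t) | ∃ k : ℤ, (g ^ k) (Sum.inr v) = w} =
          Set.range Sum.inr) ∧
      -- `⟨g⟩` acts freely on the edge set
      (∀ k : ℤ, ∀ e ∈ (blowupCycle r s t).edgeSet, Sym2.map ⇑(g ^ k) e = e → g ^ k = 1) ∧
      -- with exactly two orbits
      (∃ e₁ ∈ (blowupCycle r s t).edgeSet, ∃ e₂ ∈ (blowupCycle r s t).edgeSet,
        ¬ (∃ k : ℤ, Sym2.map ⇑(g ^ k) e₁ = e₂) ∧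
        ∀ e ∈ (blowupCycle r s t).edgeSet,
          (∃ k : ℤ, Sym2.map ⇑(g ^ k) e₁ = e) ∨ (∃ k : ℤ, Sym2.map ⇑(g ^ k) e₂ = e))) ∧
    -- a dihedral subgroup of order `2rst` acting regularly on the edge set
    (∃ H : Subgroup (blowupCycle r s t ≃g blowupCycle r s t),
      Nonempty (H ≃* DihedralGroup (r * s * t)) ∧
      (∀ e ∈ (blowupCycle r s t).edgeSet, ∀ e' ∈ (blowupCycle r s t).edgeSet,
        ∃ h ∈ H, Sym2.map ⇑h e = e') ∧
      (∀ h ∈ H, (∃ e ∈ (blowupCycle r s t).edgeSet, Sym2.map ⇑h e = e) → h = 1)) := by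
  have : NeZero r := ⟨by omega⟩
  have : NeZero s := ⟨by omega⟩
  have : NeZero t := ⟨by omega⟩
  have : Fact (1 < r) := ⟨by omega⟩
  obtain ⟨E, ρ, h1E, h2E, h3E, h4E, hadj, hρ⟩ := bc_exists_hom r s t
  set e₀ : Sym2 ((ZMod r × ZMod s) ⊕ (ZMod r × ZMod t)) :=
    s(E (Sum.inl 0), E (Sum.inr 0)) with he₀
  have he₀m : e₀ ∈ (blowupCycle r s t).edgeSet := by
    rw [he₀, SimpleGraph.mem_edgeSet, hadj]; left; simp
  have hmem : ∀ (g : blowupCycle r s t ≃g blowupCycle r s t),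
      ∀ e ∈ (blowupCycle r s t).edgeSet, Sym2.map ⇑g e ∈ (blowupCycle r s t).edgeSet := by
    intro g e he
    induction e with
    | _ v w =>
      rw [Sym2.map_mk, SimpleGraph.mem_edgeSet]
      exact g.map_rel_iff.2 he
  have hmul : ∀ (g h : blowupCycle r s t ≃g blowupCycle r s t) e,
      Sym2.map ⇑(g * h) e = Sym2.map ⇑g (Sym2.map ⇑h e) := by
    intro g h e
    rw [Sym2.map_map]; rfl
  -- every edge is in the orbit of the base edge
  have hlr : ∀ a b, bcRel r s t a b → ∃ d, Sym2.map ⇑(ρ d) e₀ = s(E (Sum.inl a), E (Sum.inr b)) := by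
    intro a b h
    rcases h with h | h
    · obtain ⟨c, hc1, hc2⟩ := bc_crt r s t hgcd a b h.symm
      refine ⟨.r c, ?_⟩
      rw [he₀, Sym2.map_mk, hρ, hρ]
      simp only [bcAct, hc1, hc2, zero_add]
    · obtain ⟨c, hc1, hc2⟩ := bc_crt r s t hgcd (-a) (-1 - b) (by
        rw [map_neg, map_sub, map_neg, map_one, h]; ring)
      refine ⟨.sr c, ?_⟩
      rw [he₀, Sym2.map_mk, hρ, hρ]
      simp only [bcAct, hc1, hc2, zero_add, neg_neg, sub_sub_cancel]
  have hsurj : ∀ e ∈ (blowupCycle r s t).edgeSet, ∃ d, Sym2.map ⇑(ρ d) e₀ = e := by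
    intro e he
    induction e with
    | _ v w =>
      rw [SimpleGraph.mem_edgeSet] at he
      rcases v with p | p <;> rcases w with q | q
      · exact absurd he (bc_not_ll _ _ _ _ _)
      · obtain ⟨a, ha⟩ := h1E p
        obtain ⟨b, hb⟩ := h2E q
        rw [← ha, ← hb] at he ⊢
        exact hlr a b ((hadj _ _).1 he)
      · obtain ⟨a, ha⟩ := h2E p
        obtain ⟨b, hb⟩ := h1E q
        rw [← ha, ← hb] at he ⊢
        rw [Sym2.eq_swap]
        exact hlr b a ((hadj _ _).1 he.symm)
      · exact absurd he (bc_not_rr _ _ _ _ _)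
  have hne : ∀ i j : ZMod (r * s * t),
      bcRed _ _ (bc_dvd1 r s t) i = -bcRed _ _ (bc_dvd1 r s t) j →
      bcRed _ _ (bc_dvd2 r s t) i = -1 - bcRed _ _ (bc_dvd2 r s t) j → False := by
    intro i j h1 h2
    have h1' := congrArg (bcRed r (r * s) (dvd_mul_right r s)) h1
    have h2' := congrArg (bcRed r (r * t) (dvd_mul_right r t)) h2
    rw [map_neg] at h1'
    rw [map_sub, map_neg, map_one, bcRed_comp, bcRed_comp, h1'] at h2'
    have : (1 : ZMod r) = 0 := by linear_combination h2'
    exact one_ne_zero this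
  have hinj0 : ∀ d d', Sym2.map ⇑(ρ d) e₀ = Sym2.map ⇑(ρ d') e₀ → d = d' := by
    intro d d' h
    rw [he₀, Sym2.map_mk, Sym2.map_mk, hρ, hρ, hρ, hρ] at h
    rcases d with i | i <;> rcases d' with j | j <;>
      simp only [bcAct, zero_add, Sym2.eq_iff, E.injective.eq_iff, Sum.inl.injEq, Sum.inr.injEq,
        reduceCtorEq, and_false, or_false, neg_inj, sub_right_inj] at h
    · rw [bc_crt_inj r s t hgcd i j h.1 h.2]
    · exact (hne i j h.1 h.2).elim
    · exact (hne j i h.1.symm h.2.symm).elim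
    · rw [bc_crt_inj r s t hgcd i j h.1 h.2]
  have hfree : ∀ d, ∀ e ∈ (blowupCycle r s t).edgeSet, Sym2.map ⇑(ρ d) e = e → d = 1 := by
    intro d e he h
    obtain ⟨c, rfl⟩ := hsurj e he
    rw [← hmul, ← map_mul] at h
    exact mul_eq_right.1 (hinj0 _ _ h)
  have hinj : Function.Injective ρ := by
    intro d d' h
    exact hinj0 d d' (by rw [h])
  have hpow : ∀ k : ℤ, (ρ (.r 1)) ^ k = ρ (.r (k : ZMod (r * s * t))) := by
    intro k
    rw [← map_zpow, DihedralGroup.r_one_zpow]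
  have hpow' : ∀ c : ZMod (r * s * t), ∃ k : ℤ, (ρ (.r 1)) ^ k = ρ (.r c) := by
    intro c
    obtain ⟨k, hk⟩ := ZMod.intCast_surjective c
    exact ⟨k, by rw [hpow, hk]⟩
  refine ⟨bc_connected r s t, ⟨ρ (.r 1), ?_, ?_, ?_, ?_, ?_⟩, ρ.range, ?_, ?_, ?_⟩
  · rw [orderOf_injective ρ hinj, DihedralGroup.orderOf_r_one]
  · intro p
    ext w
    simp only [Set.mem_setOf_eq, Set.mem_range]
    obtain ⟨a, ha⟩ := h1E p
    constructor
    · rintro ⟨k, rfl⟩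
      rw [hpow, ← ha, hρ]
      obtain ⟨q, hq⟩ := h3E (a + bcRed _ _ (bc_dvd1 r s t) (k : ZMod (r * s * t)))
      exact ⟨q, hq.symm⟩
    · rintro ⟨q, rfl⟩
      obtain ⟨b, hb⟩ := h1E q
      obtain ⟨c, hc⟩ := ZMod.castHom_surjective (bc_dvd1 r s t) (b - a)
      obtain ⟨k, hk⟩ := hpow' c
      refine ⟨k, ?_⟩
      rw [hk, ← ha, hρ, ← hb]
      simp only [bcAct, bcRed, hc, add_sub_cancel]
  · intro p
    ext w
    simp only [Set.mem_setOf_eq, Set.mem_range]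
    obtain ⟨a, ha⟩ := h2E p
    constructor
    · rintro ⟨k, rfl⟩
      rw [hpow, ← ha, hρ]
      obtain ⟨q, hq⟩ := h4E (a + bcRed _ _ (bc_dvd2 r s t) (k : ZMod (r * s * t)))
      exact ⟨q, hq.symm⟩
    · rintro ⟨q, rfl⟩
      obtain ⟨b, hb⟩ := h2E q
      obtain ⟨c, hc⟩ := ZMod.castHom_surjective (bc_dvd2 r s t) (b - a)
      obtain ⟨k, hk⟩ := hpow' c
      refine ⟨k, ?_⟩
      rw [hk, ← ha, hρ, ← hb]
      simp only [bcAct, bcRed, hc, add_sub_cancel]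
  · intro k e he h
    rw [hpow] at h ⊢
    rw [hfree _ e he h, map_one]
  · refine ⟨e₀, he₀m, Sym2.map ⇑(ρ (.sr 0)) e₀, hmem _ _ he₀m, ?_, ?_⟩
    · rintro ⟨k, hk⟩
      rw [hpow] at hk
      have := hinj0 _ _ hk
      simp at this
    · intro e he
      obtain ⟨d, rfl⟩ := hsurj e he
      rcases d with i | i
      · left
        obtain ⟨k, hk⟩ := hpow' i
        exact ⟨k, by rw [hk]⟩
      · right
        obtain ⟨k, hk⟩ := hpow' (-i)
        refine ⟨k, ?_⟩
        rw [hk, ← hmul, ← map_mul, DihedralGroup.r_mul_sr, zero_sub, neg_neg]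
  · exact ⟨(MonoidHom.ofInjective hinj).symm⟩
  · intro e he e' he'
    obtain ⟨d, rfl⟩ := hsurj e he
    obtain ⟨d', rfl⟩ := hsurj e' he'
    refine ⟨ρ (d' * d⁻¹), ⟨_, rfl⟩, ?_⟩
    rw [← hmul, ← map_mul, inv_mul_cancel_right]
  · rintro _ ⟨d, rfl⟩ ⟨e, he, h⟩
    rw [hfree d e he h, map_one]
end

section
/- Let r ≥ 2 and s, t ≥ 1 with s·t > 1 and Nat.gcd s t = 1, and set ℓ = 2·r·s·t. Then Γ = C_{2r}[sK_1,tK_1] has an Eulerian circuit with edge list (e_0, …, e_{ℓ−1}) such that there exist automorphisms σ and ρ of Γ with σ(e_i) = e_{(i+2) mod ℓ} for all i and ρ(e_i) = e_{(ℓ−1−i) mod ℓ} for all i; moreover, for every Eulerian circuit of Γ with edge list (f_0, …, f_{ℓ−1}) there is no automorphism σ' of Γ with σ'(f_i) = f_{(i+1) mod ℓ} for all i. -/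
namespace BC
open SimpleGraph

def UU (r s : ℕ) (m : ℤ) : ZMod r × ZMod s := ((m : ZMod r), ((m / (r : ℤ) : ℤ) : ZMod s))

lemma UU_eq {r s : ℕ} (hr : 0 < r) (m n : ℤ) : UU r s m = UU r s n ↔ ((r : ℤ) * s) ∣ m - n := by
  have hr' : (r : ℤ) ≠ 0 := by positivity
  have key : ∀ c : ℤ, m = n + r * c → (UU r s m = UU r s n ↔ (s : ℤ) ∣ c) := by
    rintro c rfl
    unfold UU
    rw [Int.add_mul_ediv_left _ _ hr', ← ZMod.intCast_zmod_eq_zero_iff_dvd]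
    simp
  constructor
  · intro h
    have h1 : (m : ZMod r) = n := congrArg Prod.fst h
    have h2 : (r : ℤ) ∣ m - n := by
      rw [← ZMod.intCast_zmod_eq_zero_iff_dvd]; push_cast; rw [h1, sub_self]
    obtain ⟨c, hc⟩ := h2
    rw [hc]
    exact mul_dvd_mul_left _ ((key c (by linarith)).1 h)
  · rintro ⟨c, hc⟩
    exact (key (s * c) (by linarith)).2 ⟨c, rfl⟩

lemma UU_surj {r s : ℕ} (hr : 0 < r) (hs : 0 < s) : Function.Surjective (UU r s) := by
  have : NeZero r := ⟨hr.ne'⟩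
  have : NeZero s := ⟨hs.ne'⟩
  rintro ⟨k, i⟩
  have hr' : (r : ℤ) ≠ 0 := by positivity
  refine ⟨k.val + r * i.val, ?_⟩
  unfold UU
  rw [Int.add_mul_ediv_left _ _ hr']
  have : (k.val : ℤ) / r = 0 := Int.ediv_eq_zero_of_lt (by positivity) (by exact_mod_cast k.val_lt)
  rw [this]
  simp

lemma exists_equiv {r s : ℕ} (hr : 0 < r) (hs : 0 < s) (ε c : ℤ) (hε : ε * ε = 1) :
    ∃ e : (ZMod r × ZMod s) ≃ (ZMod r × ZMod s), ∀ m, e (UU r s m) = UU r s (ε * m + c) := by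
  have hS := UU_surj hr hs
  let F : ℤ → (ZMod r × ZMod s) → (ZMod r × ZMod s) := fun d x => UU r s (ε * Function.surjInv hS x + d)
  have hF : ∀ d m, F d (UU r s m) = UU r s (ε * m + d) := by
    intro d m
    have h1 := (UU_eq hr _ _).1 (Function.surjInv_eq hS (UU r s m))
    refine (UU_eq hr _ _).2 ?_
    have := h1.mul_left ε
    rwa [show ε * Function.surjInv hS (UU r s m) + d - (ε * m + d) =
      ε * (Function.surjInv hS (UU r s m) - m) by ring]
  clear_value F
  refine ⟨⟨F c, F (-ε * c), ?_, ?_⟩, hF c⟩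
  · intro x
    obtain ⟨m, rfl⟩ := hS x
    rw [hF, hF]; congr 1; linear_combination m * hε
  · intro x
    obtain ⟨m, rfl⟩ := hS x
    rw [hF, hF]; congr 1; linear_combination (m - c) * hε

lemma adj_lr {r s t : ℕ} (x : ZMod r × ZMod s) (y : ZMod r × ZMod t) :
    (blowupCycle r s t).Adj (Sum.inl x) (Sum.inr y) ↔ (y.1 = x.1 ∨ y.1 = x.1 - 1) := by
  obtain ⟨k, i⟩ := x
  obtain ⟨k', j⟩ := y
  simp [blowupCycle]

lemma adj_rl {r s t : ℕ} (x : ZMod r × ZMod s) (y : ZMod r × ZMod t) :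
    (blowupCycle r s t).Adj (Sum.inr y) (Sum.inl x) ↔ (y.1 = x.1 ∨ y.1 = x.1 - 1) := by
  rw [SimpleGraph.adj_comm, adj_lr]

lemma adj_ll {r s t : ℕ} (x y : ZMod r × ZMod s) :
    ¬ (blowupCycle r s t).Adj (Sum.inl x) (Sum.inl y) := by
  simp [blowupCycle]

lemma adj_rr {r s t : ℕ} (x y : ZMod r × ZMod t) :
    ¬ (blowupCycle r s t).Adj (Sum.inr x) (Sum.inr y) := by
  simp [blowupCycle]

lemma adj_UU {r s t : ℕ} (m n : ℤ) :
    (blowupCycle r s t).Adj (Sum.inl (UU r s m)) (Sum.inr (UU r t n)) ↔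
      ((r : ℤ) ∣ n - m ∨ (r : ℤ) ∣ n - m + 1) := by
  rw [adj_lr, ← ZMod.intCast_zmod_eq_zero_iff_dvd, ← ZMod.intCast_zmod_eq_zero_iff_dvd]
  simp only [UU]
  push_cast
  rw [sub_eq_zero]
  refine or_congr Iff.rfl ?_
  constructor
  · intro h; rw [h]; ring
  · intro h; linear_combination h

lemma exists_iso {r s t : ℕ} (hr : 0 < r) (hs : 0 < s) (ht : 0 < t) (ε c d : ℤ) (hε : ε * ε = 1)
    (H : ∀ m n : ℤ, ((r : ℤ) ∣ (ε * n + d) - (ε * m + c) ∨ (r : ℤ) ∣ (ε * n + d) - (ε * m + c) + 1)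
      ↔ ((r : ℤ) ∣ n - m ∨ (r : ℤ) ∣ n - m + 1)) :
    ∃ e : blowupCycle r s t ≃g blowupCycle r s t,
      (∀ m, e (Sum.inl (UU r s m)) = Sum.inl (UU r s (ε * m + c))) ∧
      (∀ m, e (Sum.inr (UU r t m)) = Sum.inr (UU r t (ε * m + d))) := by
  obtain ⟨e1, h1⟩ := exists_equiv hr hs ε c hε
  obtain ⟨e2, h2⟩ := exists_equiv hr ht ε d hε
  have K : ∀ x y, (blowupCycle r s t).Adj (Sum.inl (e1 x)) (Sum.inr (e2 y)) ↔
      (blowupCycle r s t).Adj (Sum.inl x) (Sum.inr y) := by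
    intro x y
    obtain ⟨m, rfl⟩ := UU_surj hr hs x
    obtain ⟨n, rfl⟩ := UU_surj hr ht y
    rw [h1, h2, adj_UU, adj_UU]; exact H m n
  refine ⟨⟨Equiv.sumCongr e1 e2, ?_⟩, ?_, ?_⟩
  · rintro (x | x) (y | y)
    · simp [adj_ll]
    · simpa using K x y
    · simpa [SimpleGraph.adj_comm] using K y x
    · simp [adj_rr]
  · intro m; simp [h1]
  · intro m; simp [h2]

def ff (r s t : ℕ) (n : ℤ) : (ZMod r × ZMod s) ⊕ (ZMod r × ZMod t) :=
  if n % 2 = 0 then Sum.inl (UU r s (n / 2)) else Sum.inr (UU r t (n / 2))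

lemma ff_even (r s t : ℕ) (m : ℤ) : ff r s t (2 * m) = Sum.inl (UU r s m) := by
  simp [ff]

lemma ff_odd (r s t : ℕ) (m : ℤ) : ff r s t (2 * m + 1) = Sum.inr (UU r t m) := by
  have : (2 * m + 1) % 2 ≠ 0 := by omega
  have h : (2 * m + 1) / 2 = m := by omega
  simp only [ff, if_neg this, h]

lemma ff_adj (r s t : ℕ) (n : ℤ) : (blowupCycle r s t).Adj (ff r s t n) (ff r s t (n + 1)) := by
  obtain ⟨m, rfl | rfl⟩ := Int.even_or_odd' n
  · rw [ff_even, ff_odd, adj_UU]; simp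
  · rw [ff_odd, show 2 * m + 1 + 1 = 2 * (m + 1) by ring, ff_even, SimpleGraph.adj_comm, adj_UU]
    right; simp

def EE (r s t : ℕ) (n : ℤ) : Sym2 ((ZMod r × ZMod s) ⊕ (ZMod r × ZMod t)) :=
  s(ff r s t n, ff r s t (n + 1))

lemma EE_even (r s t : ℕ) (m : ℤ) :
    EE r s t (2 * m) = s(Sum.inl (UU r s m), Sum.inr (UU r t m)) := by
  rw [EE, ff_even, ff_odd]

lemma EE_odd (r s t : ℕ) (m : ℤ) :
    EE r s t (2 * m + 1) = s(Sum.inl (UU r s (m + 1)), Sum.inr (UU r t m)) := by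
  rw [EE, ff_odd, show 2 * m + 1 + 1 = 2 * (m + 1) by ring, ff_even, Sym2.eq_swap]

lemma lcm_dvd {r s t : ℕ} (hr : 0 < r) (h : Nat.gcd s t = 1) {x : ℤ} (h1 : (r : ℤ) * s ∣ x)
    (h2 : (r : ℤ) * t ∣ x) : (r : ℤ) * s * t ∣ x := by
  obtain ⟨c, rfl⟩ : (r : ℤ) ∣ x := (Dvd.intro _ rfl).trans h1
  have hr' : (r : ℤ) ≠ 0 := by positivity
  rw [mul_assoc]
  refine mul_dvd_mul_left _ ?_
  exact IsCoprime.mul_dvd (Nat.isCoprime_iff_coprime.2 h)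
    ((mul_dvd_mul_iff_left hr').1 h1) ((mul_dvd_mul_iff_left hr').1 h2)

lemma EE_eq {r s t : ℕ} (hr : 2 ≤ r) (h : Nat.gcd s t = 1) (m n : ℤ) :
    EE r s t m = EE r s t n ↔ 2 * ((r : ℤ) * s * t) ∣ m - n := by
  have hr0 : 0 < r := by omega
  have hx : ∀ a b c d, (s(Sum.inl (UU r s a), Sum.inr (UU r t b)) :
      Sym2 ((ZMod r × ZMod s) ⊕ (ZMod r × ZMod t))) = s(Sum.inl (UU r s c), Sum.inr (UU r t d)) ↔
      ((r : ℤ) * s ∣ a - c ∧ (r : ℤ) * t ∣ b - d) := by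
    intro a b c d
    simp [UU_eq hr0]
  have h01 : ∀ a b : ℤ, ¬ ((r : ℤ) * s ∣ a - (b + 1) ∧ (r : ℤ) * t ∣ a - b) := by
    rintro a b ⟨h1, h2⟩
    have h3 := dvd_sub ((Dvd.intro _ rfl).trans h2) ((Dvd.intro _ rfl : (r : ℤ) ∣ _).trans h1)
    rw [show a - b - (a - (b + 1)) = 1 by ring] at h3
    have := Int.le_of_dvd one_pos h3
    omega
  have hd : ∀ a b : ℤ, ((r : ℤ) * s ∣ a - b ∧ (r : ℤ) * t ∣ a - b) ↔ (r : ℤ) * s * t ∣ a - b := by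
    intro a b
    refine ⟨fun h' => lcm_dvd hr0 h h'.1 h'.2, fun h' => ⟨(Dvd.intro _ rfl).trans h',
      (Dvd.intro (s : ℤ) (by ring)).trans h'⟩⟩
  have hodd : ∀ a : ℤ, a % 2 = 1 → ¬ 2 * ((r : ℤ) * s * t) ∣ a := by
    rintro a ha ⟨c, rfl⟩
    rw [mul_assoc] at ha; omega
  obtain ⟨a, rfl | rfl⟩ := Int.even_or_odd' m <;> obtain ⟨b, rfl | rfl⟩ := Int.even_or_odd' n
  · rw [EE_even, EE_even, hx, hd, ← mul_sub, mul_dvd_mul_iff_left two_ne_zero]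
  · rw [EE_even, EE_odd, hx]
    exact iff_of_false (h01 a b) (hodd _ (by omega))
  · rw [EE_odd, EE_even, eq_comm, hx]
    exact iff_of_false (h01 b a) (hodd _ (by omega))
  · rw [EE_odd, EE_odd, hx, show a + 1 - (b + 1) = a - b by ring, hd,
      show 2 * a + 1 - (2 * b + 1) = 2 * (a - b) by ring, mul_dvd_mul_iff_left two_ne_zero]

lemma crt {r s t : ℕ} (h : Nat.gcd s t = 1) {m n : ℤ} (hd : (r : ℤ) ∣ n - m) :
    ∃ x, (r : ℤ) * s ∣ x - m ∧ (r : ℤ) * t ∣ x - n := by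
  obtain ⟨c, hc⟩ := hd
  obtain ⟨a, b, hab⟩ := Nat.isCoprime_iff_coprime.2 h
  refine ⟨m + r * s * (a * c), ⟨a * c, by ring⟩, ⟨-b * c, ?_⟩⟩
  linear_combination -hc + r * c * hab

lemma EE_surj {r s t : ℕ} (hr : 0 < r) (hs : 0 < s) (ht : 0 < t) (h : Nat.gcd s t = 1)
    (e) (he : e ∈ (blowupCycle r s t).edgeSet) : ∃ n, EE r s t n = e := by
  have K : ∀ x y, (blowupCycle r s t).Adj (Sum.inl x) (Sum.inr y) →
      ∃ n, EE r s t n = s(Sum.inl x, Sum.inr y) := by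
    intro x y hxy
    obtain ⟨m, rfl⟩ := UU_surj hr hs x
    obtain ⟨n, rfl⟩ := UU_surj hr ht y
    rw [adj_UU] at hxy
    rcases hxy with h1 | h1
    · obtain ⟨z, h2, h3⟩ := crt h h1
      exact ⟨2 * z, by rw [EE_even, (UU_eq hr _ _).2 h2, (UU_eq hr _ _).2 h3]⟩
    · obtain ⟨z, h2, h3⟩ := crt (m := m - 1) (n := n) h (by convert h1 using 1; ring)
      refine ⟨2 * z + 1, ?_⟩
      rw [EE_odd, (UU_eq hr (z + 1) m).2 (by convert h2 using 1; ring), (UU_eq hr _ _).2 h3]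
  induction e using Sym2.ind with
  | _ x y =>
    rw [SimpleGraph.mem_edgeSet] at he
    rcases x with x | x <;> rcases y with y | y
    · exact (adj_ll _ _ he).elim
    · exact K _ _ he
    · rw [Sym2.eq_swap]; exact K _ _ he.symm
    · exact (adj_rr _ _ he).elim

lemma exists_walk (r s t : ℕ) (n : ℕ) : ∃ p : (blowupCycle r s t).Walk (ff r s t 0) (ff r s t n),
    p.edges = (List.range n).map (fun i : ℕ => EE r s t i) := by
  induction n with
  | zero => exact ⟨SimpleGraph.Walk.nil, by simp⟩
  | succ n ih =>
    obtain ⟨p, hp⟩ := ih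
    have ha := ff_adj r s t n
    refine ⟨(p.concat ha).copy rfl (by push_cast; rfl), ?_⟩
    rw [SimpleGraph.Walk.edges_copy, SimpleGraph.Walk.edges_concat, hp, List.range_succ]
    simp [EE]

lemma ncard_l {r s t : ℕ} (hr : 2 ≤ r) (x : ZMod r × ZMod s) :
    ((blowupCycle r s t).neighborSet (Sum.inl x)).ncard = 2 * t := by
  have : Fact (1 < r) := ⟨by omega⟩
  have : (blowupCycle r s t).neighborSet (Sum.inl x) =
      Sum.inr '' (({x.1, x.1 - 1} : Set (ZMod r)) ×ˢ (Set.univ : Set (ZMod t))) := by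
    ext (y | y)
    · simp [adj_ll]
    · simp [adj_lr]
  rw [this, Set.ncard_image_of_injective _ Sum.inr_injective, Set.ncard_prod, Set.ncard_pair,
    Set.ncard_univ, Nat.card_zmod]
  intro h
  exact one_ne_zero (sub_eq_self.1 h.symm)

lemma ncard_r {r s t : ℕ} (hr : 2 ≤ r) (y : ZMod r × ZMod t) :
    ((blowupCycle r s t).neighborSet (Sum.inr y)).ncard = 2 * s := by
  have : Fact (1 < r) := ⟨by omega⟩
  have : (blowupCycle r s t).neighborSet (Sum.inr y) =
      Sum.inl '' (({y.1, y.1 + 1} : Set (ZMod r)) ×ˢ (Set.univ : Set (ZMod s))) := by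
    ext (x | x)
    · simp [adj_rl, eq_comm, eq_sub_iff_add_eq]
    · simp [adj_rr]
  rw [this, Set.ncard_image_of_injective _ Sum.inl_injective, Set.ncard_prod, Set.ncard_pair,
    Set.ncard_univ, Nat.card_zmod]
  intro h
  exact one_ne_zero (left_eq_add.1 h)

lemma ncard_iso {V : Type*} {G : SimpleGraph V} (e : G ≃g G) (v : V) :
    (G.neighborSet (e v)).ncard = (G.neighborSet v).ncard :=
  (Nat.card_congr (e.mapNeighborSet v)).symm

lemma no_iso {r s t : ℕ} (hr : 2 ≤ r) (hst : 1 < s * t) (h : Nat.gcd s t = 1)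
    (e : blowupCycle r s t ≃g blowupCycle r s t) (v) : ¬ (blowupCycle r s t).Adj v (e v) := by
  intro ha
  have h1 := ncard_iso e v
  have : s = t := by
    generalize e v = w at *
    rcases v with x | x <;> rcases w with y | y
    · exact (adj_ll _ _ ha).elim
    · rw [ncard_l hr, ncard_r hr] at h1; omega
    · rw [ncard_l hr, ncard_r hr] at h1; omega
    · exact (adj_rr _ _ ha).elim
  subst this
  rw [Nat.gcd_self] at h
  subst h
  omega

lemma three {r s t : ℕ} (hr : 2 ≤ r) (w) (q : (blowupCycle r s t).Walk w w)
    (hq : q.IsEulerian) : 3 ≤ q.edges.length := by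
  have : Fact (1 < r) := ⟨by omega⟩
  let a : (ZMod r × ZMod s) ⊕ (ZMod r × ZMod t) := Sum.inl (0, 0)
  let a' : (ZMod r × ZMod s) ⊕ (ZMod r × ZMod t) := Sum.inl (1, 0)
  let b : (ZMod r × ZMod s) ⊕ (ZMod r × ZMod t) := Sum.inr (0, 0)
  let b' : (ZMod r × ZMod s) ⊕ (ZMod r × ZMod t) := Sum.inr (-1, 0)
  have hn : [s(a, b), s(a, b'), s(a', b)].Nodup := by
    simp [a, b, a', b']
  have hsub : [s(a, b), s(a, b'), s(a', b)] ⊆ q.edges := by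
    intro e he
    refine hq.mem_edges_iff.2 ?_
    simp only [List.mem_cons, List.not_mem_nil, or_false] at he
    rcases he with rfl | rfl | rfl
    · exact (adj_lr _ _).2 (by simp)
    · exact (adj_lr _ _).2 (by simp)
    · exact (adj_lr _ _).2 (by simp)
  simpa using (List.subperm_of_subset hn hsub).length_le

end BC

open BC in
theorem stmt10 (r s t : ℕ) (hr : 2 ≤ r) (hs : 1 ≤ s) (ht : 1 ≤ t) (hst : 1 < s * t)
    (hgcd : Nat.gcd s t = 1) :
    (∃ (v : (ZMod r × ZMod s) ⊕ (ZMod r × ZMod t)) (p : (blowupCycle r s t).Walk v v),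
      p.IsEulerian ∧
      (∃ σ : blowupCycle r s t ≃g blowupCycle r s t, ∀ i : Fin p.edges.length,
        Sym2.map ⇑σ (p.edges.get i) =
          p.edges.get ⟨((i : ℕ) + 2) % p.edges.length, Nat.mod_lt _ i.pos⟩) ∧
      (∃ ρ : blowupCycle r s t ≃g blowupCycle r s t, ∀ i : Fin p.edges.length,
        Sym2.map ⇑ρ (p.edges.get i) =
          p.edges.get ⟨(p.edges.length - 1 - (i : ℕ)) % p.edges.length, Nat.mod_lt _ i.pos⟩)) ∧
    -- no Eulerian circuit admits a shift-by-one automorphism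
    (∀ (w : (ZMod r × ZMod s) ⊕ (ZMod r × ZMod t)) (q : (blowupCycle r s t).Walk w w),
      q.IsEulerian →
      ¬ ∃ σ' : blowupCycle r s t ≃g blowupCycle r s t, ∀ i : Fin q.edges.length,
        Sym2.map ⇑σ' (q.edges.get i) =
          q.edges.get ⟨((i : ℕ) + 1) % q.edges.length, Nat.mod_lt _ i.pos⟩) := by
  have hr0 : 0 < r := by omega
  constructor
  · obtain ⟨p0, hp0⟩ := exists_walk r s t (2 * (r * s * t))
    have hend : ff r s t ((2 * (r * s * t) : ℕ) : ℤ) = ff r s t 0 := by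
      push_cast
      rw [ff_even, show (0 : ℤ) = 2 * 0 by norm_num, ff_even, (UU_eq hr0 _ 0).2]
      simp
    obtain ⟨p, hp⟩ : ∃ p : (blowupCycle r s t).Walk (ff r s t 0) (ff r s t 0),
        p.edges = (List.range (2 * (r * s * t))).map (fun i : ℕ => EE r s t i) :=
      ⟨p0.copy rfl hend, by rw [SimpleGraph.Walk.edges_copy, hp0]⟩
    have hlen : p.edges.length = 2 * (r * s * t) := by rw [hp]; simp
    have hget : ∀ (i : ℕ) (hi : i < p.edges.length), p.edges[i] = EE r s t i := by
      intro i hi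
      simp [hp]
    have hNpos : 0 < 2 * (r * s * t) := by positivity
    have hmod : ∀ (i : ℕ) (j : ℤ), EE r s t j = EE r s t (i : ℤ) →
        EE r s t j = EE r s t ((i % (2 * (r * s * t)) : ℕ) : ℤ) := by
      intro i j h
      rw [h, EE_eq hr hgcd]
      refine ⟨i / (2 * (r * s * t)), ?_⟩
      have := Int.emod_add_mul_ediv (i : ℤ) (2 * (r * s * t))
      push_cast
      linarith
    refine ⟨_, p, ?_, ?_, ?_⟩
    · apply SimpleGraph.Walk.IsTrail.isEulerian_of_forall_mem
      · refine ⟨?_⟩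
        rw [hp]
        refine List.Nodup.map_on ?_ List.nodup_range
        intro x hx y hy hxy
        rw [List.mem_range] at hx hy
        rw [EE_eq hr hgcd] at hxy
        have h0 := Int.eq_zero_of_abs_lt_dvd hxy (by
          have : (2 * ((r : ℤ) * s * t)) = ((2 * (r * s * t) : ℕ) : ℤ) := by push_cast; ring
          rw [this, abs_lt]; constructor <;> omega)
        omega
      · intro e he
        obtain ⟨n, rfl⟩ := EE_surj hr0 hs ht hgcd e he
        rw [hp, List.mem_map]
        have hpos : (0 : ℤ) < ((2 * (r * s * t) : ℕ) : ℤ) := by exact_mod_cast hNpos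
        have h1 := Int.emod_nonneg n hpos.ne'
        have h2 := Int.emod_lt_of_pos n hpos
        refine ⟨(n % ((2 * (r * s * t) : ℕ) : ℤ)).toNat, ?_, ?_⟩
        · rw [List.mem_range]; omega
        · rw [Int.toNat_of_nonneg h1, EE_eq hr hgcd]
          refine ⟨-(n / ((2 * (r * s * t) : ℕ) : ℤ)), ?_⟩
          have := Int.emod_add_mul_ediv n ((2 * (r * s * t) : ℕ) : ℤ)
          push_cast at this ⊢
          linarith
    · obtain ⟨σ, h1, h2⟩ := exists_iso (r := r) (s := s) (t := t) hr0 hs ht 1 1 1 (by norm_num)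
        (by intro m n; rw [show 1 * n + 1 - (1 * m + 1) = n - m by ring])
      refine ⟨σ, ?_⟩
      have hf : ∀ n, σ (ff r s t n) = ff r s t (n + 2) := by
        intro n
        obtain ⟨m, rfl | rfl⟩ := Int.even_or_odd' n
        · rw [ff_even, h1, show 2 * m + 2 = 2 * (1 * m + 1) by ring, ff_even]
        · rw [ff_odd, h2, show 2 * m + 1 + 2 = 2 * (1 * m + 1) + 1 by ring, ff_odd]
      intro i
      simp only [List.get_eq_getElem, hget, hlen]
      rw [← hmod (i + 2) ((i : ℕ) + 2) (by push_cast; rfl)]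
      simp only [EE, Sym2.map_mk, hf]
      rw [add_right_comm]
    · obtain ⟨ρ, h1, h2⟩ := exists_iso (r := r) (s := s) (t := t) hr0 hs ht (-1) 0 (-1) (by norm_num)
        (by
          intro m n
          rw [show -1 * n + -1 - (-1 * m + 0) = - (n - m + 1) by ring,
            show - (n - m + 1) + 1 = -(n - m) by ring, dvd_neg, dvd_neg, or_comm])
      refine ⟨ρ, ?_⟩
      have hf : ∀ n, ρ (ff r s t n) = ff r s t (-n) := by
        intro n
        obtain ⟨m, rfl | rfl⟩ := Int.even_or_odd' n
        · rw [ff_even, h1, show -(2 * m) = 2 * (-1 * m + 0) by ring, ff_even]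
        · rw [ff_odd, h2, show -(2 * m + 1) = 2 * (-1 * m + -1) + 1 by ring, ff_odd]
      intro i
      have hi := i.2
      simp only [List.get_eq_getElem, hget, hlen]
      have hE : EE r s t (-(i : ℕ) - 1) = EE r s t ((2 * (r * s * t) - 1 - (i : ℕ) : ℕ) : ℤ) := by
        rw [EE_eq hr hgcd]
        refine ⟨-1, ?_⟩
        have hi2 : (i : ℕ) < 2 * (r * s * t) := hlen ▸ hi
        clear hi
        have : (2 * ((r : ℤ) * s * t)) = ((2 * (r * s * t) : ℕ) : ℤ) := by push_cast; ring
        rw [this]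
        omega
      rw [← hmod _ _ hE]
      simp only [EE, Sym2.map_mk, hf]
      rw [Sym2.eq_swap, sub_add_cancel, neg_add']
  · rintro w q hq ⟨σ, hσ⟩
    have h3 := three hr w q hq
    have hnd := hq.isTrail.edges_nodup
    have e0 := hσ ⟨0, by omega⟩
    have e1 := hσ ⟨1, by omega⟩
    simp only [List.get_eq_getElem] at e0 e1
    have m1 : (0 + 1) % q.edges.length = 1 := Nat.mod_eq_of_lt (by omega)
    have m2 : (1 + 1) % q.edges.length = 2 := Nat.mod_eq_of_lt (by omega)
    simp only [m1, m2] at e0 e1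
    have hne : q.edges[1] ≠ q.edges[2] := by
      intro h
      have := (hnd.getElem_inj_iff).1 h
      omega
    simp only [SimpleGraph.Walk.getElem_edges, Sym2.map_mk] at e0 e1 hne
    have hl : q.edges.length = q.length := q.length_edges
    have a1 := q.adj_getVert_succ (i := 1) (by omega)
    have a2 := q.adj_getVert_succ (i := 2) (by omega)
    apply no_iso hr hst hgcd σ (q.getVert 1)
    have : σ (q.getVert 1) = q.getVert 2 := by
      have n1 := a1.ne
      have n2 := a2.ne
      generalize q.getVert 1 = v1 at *
      simp only [Sym2.eq_iff] at e0 e1 hne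
      grind
    rw [this]; exact a1
end

section
/- Let Γ be a finite connected simple graph that has an Eulerian circuit with edge list (e_0, …, e_{ℓ−1}), and let σ be an automorphism of Γ with σ(e_i) = e_{(i+2) mod ℓ} for all i. Then the cyclic group generated by σ has at most two orbits on the vertex set of Γ; and if it has exactly two vertex orbits V_1 and V_2, then every edge of Γ has one endpoint in V_1 and one endpoint in V_2. -/
theorem aux_edge {V : Type} {Γ : SimpleGraph V} {u v : V} (p : Γ.Walk u v) :
    ∀ i (h : i < p.edges.length), p.edges[i] = s(p.getVert i, p.getVert (i+1)) := by
  induction p with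
  | nil => intro i h; simp at h
  | cons hadj q ih =>
    intro i h
    cases i with
    | zero => simp
    | succ i =>
      simp only [SimpleGraph.Walk.edges_cons, List.getElem_cons_succ,
        SimpleGraph.Walk.getVert_cons_succ]
      exact ih i _

theorem stmt11 {V : Type} [Fintype V] [DecidableEq V] (Γ : SimpleGraph V)
    (hconn : Γ.Connected)
    (v : V) (p : Γ.Walk v v) (hp : p.IsEulerian)
    (σ : Γ ≃g Γ)
    (hσ : ∀ i : Fin p.edges.length,
      Sym2.map ⇑σ (p.edges.get i) =
        p.edges.get ⟨((i : ℕ) + 2) % p.edges.length, Nat.mod_lt _ i.pos⟩) :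
    -- at most two orbits on the vertex set
    (∃ v₁ v₂ : V, ∀ w : V, (∃ k : ℤ, (σ ^ k) v₁ = w) ∨ (∃ k : ℤ, (σ ^ k) v₂ = w)) ∧
    -- if there are exactly two vertex orbits, every edge joins them
    (∀ V₁ V₂ : Set V,
      (∃ v₁ : V, V₁ = {w : V | ∃ k : ℤ, (σ ^ k) v₁ = w}) →
      (∃ v₂ : V, V₂ = {w : V | ∃ k : ℤ, (σ ^ k) v₂ = w}) →
      V₁ ≠ V₂ → (∀ w : V, w ∈ V₁ ∪ V₂) →
      ∀ e ∈ Γ.edgeSet, ∃ x ∈ V₁, ∃ y ∈ V₂, e = s(x, y)) := by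
  obtain ⟨r, hr⟩ : ∃ r : V → V → Prop, r = fun a b => ∃ k : ℤ, (σ ^ k) a = b := ⟨_, rfl⟩
  have hrr : ∀ a b, (∃ k : ℤ, (σ ^ k) a = b) ↔ r a b := by intro a b; rw [hr]
  simp only [hrr]
  have rrefl : ∀ a, r a a := fun a => (hrr a a).1 ⟨0, by simp⟩
  have rsymm : ∀ a b, r a b → r b a := by
    intro a b h
    obtain ⟨k, rfl⟩ := (hrr _ _).2 h
    refine (hrr _ _).1 ⟨-k, ?_⟩
    rw [← RelIso.mul_apply, ← zpow_add]; simp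
  have rtrans : ∀ a b c, r a b → r b c → r a c := by
    intro a b c h h'
    obtain ⟨k, rfl⟩ := (hrr _ _).2 h
    obtain ⟨l, rfl⟩ := (hrr _ _).2 h'
    refine (hrr _ _).1 ⟨l + k, ?_⟩
    rw [zpow_add, RelIso.mul_apply]
  have rσ : ∀ a, r a (σ a) := fun a => (hrr _ _).1 ⟨1, by simp⟩
  by_cases hl : p.edges.length = 0
  · have hno : ∀ e, e ∉ Γ.edgeSet := by
      intro e he
      have := hp.mem_edges_iff.2 he
      rw [List.length_eq_zero_iff.1 hl] at this
      simp at this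
    have hone : ∀ w, v = w := by
      intro w
      obtain ⟨q⟩ := hconn.preconnected v w
      cases q with
      | nil => rfl
      | cons h _ => exact absurd ((SimpleGraph.mem_edgeSet Γ).2 h) (hno _)
    refine ⟨⟨v, v, fun w => Or.inl (hone w ▸ rrefl v)⟩, ?_⟩
    intro _ _ _ _ _ _ e he
    exact absurd he (hno e)
  have hpos : 0 < p.edges.length := Nat.pos_of_ne_zero hl
  have hlen : p.length = p.edges.length := by simp
  obtain ⟨L, hL⟩ : ∃ L, L = p.edges.length := ⟨_, rfl⟩
  obtain ⟨x, hx⟩ : ∃ x : ℕ → V, ∀ i, x i = p.getVert (i % L) := ⟨_, fun _ => rfl⟩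
  have hL0 : 0 < L := by omega
  have hend : p.getVert L = p.getVert 0 := by
    rw [hL, ← hlen]; simp
  have hedge : ∀ i, p.edges[i % L]'(hL ▸ Nat.mod_lt _ hL0) = s(x i, x (i+1)) := by
    intro i
    rw [aux_edge, hx, hx]
    have h1 := Nat.mod_lt i hL0
    by_cases h : i % L + 1 = L
    · have : (i+1) % L = 0 := by
        rw [← Nat.mod_add_mod, h, Nat.mod_self]
      rw [this, h, hend]
    · have : (i+1) % L = i % L + 1 := by
        rw [← Nat.mod_add_mod]; exact Nat.mod_eq_of_lt (by omega)
      rw [this]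
  have hmem : ∀ i, s(x i, x (i+1)) ∈ Γ.edgeSet := by
    intro i
    rw [← hedge]
    exact p.edges_subset_edgeSet (List.getElem_mem _)
  have hadj : ∀ i, Γ.Adj (x i) (x (i+1)) := fun i => hmem i
  have hne : ∀ i, x i ≠ x (i+2) := by
    intro i h
    have h1 := hedge i
    have h2 := hedge (i+1)
    rw [← h, Sym2.eq_swap, ← h1] at h2
    have h3 := (List.Nodup.getElem_inj_iff hp.isTrail.edges_nodup).1 h2
    have := hadj i
    rw [hx, hx, h3] at this
    exact this.ne rfl
  have hmap : ∀ i, s(σ (x i), σ (x (i+1))) = s(x (i+2), x (i+3)) := by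
    intro i
    have := hσ ⟨i % L, hL ▸ Nat.mod_lt _ hL0⟩
    simp only [List.get_eq_getElem] at this
    rw [hedge i] at this
    rw [← hedge (i+2), ← Sym2.map_mk, this]
    congr 1
    rw [← hL, Nat.mod_add_mod]
  have hstep' : ∀ i, σ (x (i+1)) = x (i+3) := by
    intro i
    have h1 := hmap i
    have h2 := hmap (i+1)
    have h3 := hne i
    rw [Sym2.eq_iff] at h1 h2
    have inj : σ (x i) = σ (x (i+2)) → x i = x (i+2) := fun h => σ.injective h
    grind
  have hper : ∀ i, x (i + L) = x i := by intro i; simp [hx]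
  have hstep : ∀ i, σ (x i) = x (i+2) := by
    intro i
    have h := hstep' (i + L - 1)
    rw [show i + L - 1 + 1 = i + L by omega, show i + L - 1 + 3 = i + 2 + L by omega, hper, hper] at h
    exact h
  have heven : ∀ n i, r (x i) (x (i + 2 * n)) := by
    intro n i
    induction n with
    | zero => exact rrefl _
    | succ n ih =>
      refine rtrans _ _ _ ih ?_
      have := rσ (x (i + 2*n))
      rwa [hstep] at this
  have hedges : ∀ e ∈ Γ.edgeSet, ∃ i, e = s(x i, x (i+1)) := by
    intro e he
    obtain ⟨i, hi, rfl⟩ := List.getElem_of_mem (hp.mem_edges_iff.2 he)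
    refine ⟨i, ?_⟩
    rw [← hedge]
    congr 1
    exact (Nat.mod_eq_of_lt (hL ▸ hi)).symm
  have hsurj : ∀ w, ∃ j, w = x j := by
    intro w
    by_cases hw : w = x 0
    · exact ⟨0, hw⟩
    obtain ⟨q⟩ := hconn.preconnected w (x 0)
    cases q with
    | nil => exact absurd rfl hw
    | cons h _ =>
      obtain ⟨i, hi⟩ := hedges _ ((SimpleGraph.mem_edgeSet Γ).2 h)
      rw [Sym2.eq_iff] at hi
      grind
  have hcov : ∀ i w, r (x i) w ∨ r (x (i+1)) w := by
    intro i w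
    obtain ⟨j, rfl⟩ := hsurj w
    have key : ∀ a b, a % 2 = b % 2 → r (x a) (x b) := by
      intro a b hab
      rcases le_total a b with h | h
      · have := heven ((b - a)/2) a
        rwa [show a + 2 * ((b-a)/2) = b by omega] at this
      · have := heven ((a - b)/2) b
        rw [show b + 2 * ((a-b)/2) = a by omega] at this
        exact rsymm _ _ this
    by_cases h : i % 2 = j % 2
    · exact Or.inl (key _ _ h)
    · exact Or.inr (key _ _ (by omega))
  refine ⟨⟨x 0, x 1, hcov 0⟩, ?_⟩
  rintro _ _ ⟨v₁, rfl⟩ ⟨v₂, rfl⟩ hV hall e he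
  obtain ⟨i, rfl⟩ := hedges e he
  have hn : ¬ r v₁ v₂ := by
    intro h
    apply hV
    ext w
    exact ⟨fun h' => rtrans _ _ _ (rsymm _ _ h) h', fun h' => rtrans _ _ _ h h'⟩
  have ha : r v₁ (x i) ∨ r v₂ (x i) := hall (x i)
  have hb : r v₁ (x (i+1)) ∨ r v₂ (x (i+1)) := hall (x (i+1))
  have c1 := hcov i v₁
  have c2 := hcov i v₂
  rcases ha with ha | ha <;> rcases hb with hb | hb
  · exact absurd (c2.elim (rtrans _ _ _ ha) (rtrans _ _ _ hb)) hn
  · exact ⟨_, ha, _, hb, rfl⟩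
  · exact ⟨_, hb, _, ha, Sym2.eq_swap⟩
  · exact absurd (rsymm _ _ (c1.elim (rtrans _ _ _ ha) (rtrans _ _ _ hb))) hn
end

section
/- Let G be a group with subgroups L and R, and let Γ be the simple graph on the disjoint union (G⧸L) ⊕ (G⧸R) of the coset spaces in which inl x is adjacent to inr y if and only if there exists g ∈ G with x = gL and y = gR (i.e., the cosets xL and yR intersect), and there are no other adjacencies. Then: (1) Γ is connected if and only if the subgroup of G generated by L ∪ R is all of G; and (2) every vertex inl x is adjacent to every vertex inr y if and only if {l·r | l ∈ L, r ∈ R} = G. -/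
/-- The (simple) bi-coset graph `BiCos(G, L, R, L ∩ R)` on the disjoint union of the coset
spaces `G ⧸ L` and `G ⧸ R`: `inl x` is adjacent to `inr y` iff `x = gL` and `y = gR` for
some `g ∈ G`, and there are no other adjacencies. -/
def biCosetGraph (G : Type*) [Group G] (L R : Subgroup G) :
    SimpleGraph ((G ⧸ L) ⊕ (G ⧸ R)) :=
  SimpleGraph.fromRel (fun v w => ∃ g : G,
    v = Sum.inl (QuotientGroup.mk g : G ⧸ L) ∧ w = Sum.inr (QuotientGroup.mk g : G ⧸ R))

theorem biCoset_adj_iff {G : Type*} [Group G] {L R : Subgroup G} (v w) :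
    (biCosetGraph G L R).Adj v w ↔
      (∃ g : G, v = Sum.inl (QuotientGroup.mk g : G ⧸ L) ∧
        w = Sum.inr (QuotientGroup.mk g : G ⧸ R)) ∨
      (∃ g : G, w = Sum.inl (QuotientGroup.mk g : G ⧸ L) ∧
        v = Sum.inr (QuotientGroup.mk g : G ⧸ R)) := by
  unfold biCosetGraph
  rw [SimpleGraph.fromRel_adj]
  constructor
  · exact fun h => h.2
  · intro h
    refine ⟨?_, h⟩
    rcases h with ⟨g, rfl, rfl⟩ | ⟨g, rfl, rfl⟩ <;> simp

theorem biCoset_adj_mk {G : Type*} [Group G] {L R : Subgroup G} (g : G) :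
    (biCosetGraph G L R).Adj (Sum.inl (QuotientGroup.mk g : G ⧸ L))
      (Sum.inr (QuotientGroup.mk g : G ⧸ R)) :=
  (biCoset_adj_iff _ _).2 (Or.inl ⟨g, rfl, rfl⟩)

theorem biCoset_reach {G : Type*} [Group G] {L R : Subgroup G} (h : G)
    (hh : h ∈ Subgroup.closure ((L : Set G) ∪ (R : Set G))) :
    ∀ g : G, (biCosetGraph G L R).Reachable (Sum.inl (QuotientGroup.mk g : G ⧸ L))
      (Sum.inl (QuotientGroup.mk (g * h) : G ⧸ L)) := by
  induction hh using Subgroup.closure_induction with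
  | mem x hx =>
    intro g
    rcases hx with hx | hx
    · rw [show (QuotientGroup.mk (g * x) : G ⧸ L) = QuotientGroup.mk g from
        QuotientGroup.mk_mul_of_mem g hx]
    · have h1 := (biCoset_adj_mk (L := L) (R := R) g).reachable
      have h2 := (biCoset_adj_mk (L := L) (R := R) (g * x)).reachable
      rw [show (QuotientGroup.mk (g * x) : G ⧸ R) = QuotientGroup.mk g from
        QuotientGroup.mk_mul_of_mem g hx] at h2
      exact h1.trans h2.symm
  | one => intro g; rw [mul_one]
  | mul x y _ _ hx hy =>
    intro g
    rw [← mul_assoc]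
    exact (hx g).trans (hy _)
  | inv x _ hx =>
    intro g
    have := (hx (g * x⁻¹)).symm
    rwa [inv_mul_cancel_right] at this

theorem biCoset_inv {G : Type*} [Group G] {L R H : Subgroup G} (hL : L ≤ H) (hR : R ≤ H)
    (v w) (h : (biCosetGraph G L R).Reachable v w) :
    Sum.elim (Subgroup.quotientMapOfLE hL) (Subgroup.quotientMapOfLE hR) v =
    Sum.elim (Subgroup.quotientMapOfLE hL) (Subgroup.quotientMapOfLE hR) w := by
  obtain ⟨p⟩ := h
  induction p with
  | nil => rfl
  | cons h p ih =>
    rw [← ih]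
    rcases (biCoset_adj_iff _ _).1 h with ⟨g, rfl, rfl⟩ | ⟨g, rfl, rfl⟩ <;> rfl

theorem stmt13 (G : Type*) [Group G] (L R : Subgroup G) :
    ((biCosetGraph G L R).Connected ↔ Subgroup.closure ((L : Set G) ∪ (R : Set G)) = ⊤) ∧
    ((∀ (x : G ⧸ L) (y : G ⧸ R), (biCosetGraph G L R).Adj (Sum.inl x) (Sum.inr y)) ↔
      ∀ g : G, ∃ l ∈ L, ∃ r ∈ R, g = l * r) := by
  refine ⟨⟨fun hc => ?_, fun hc => ?_⟩, fun h g => ?_, fun h x y => ?_⟩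
  · have hL : L ≤ Subgroup.closure ((L : Set G) ∪ (R : Set G)) :=
      fun x hx => Subgroup.subset_closure (Or.inl hx)
    have hR : R ≤ Subgroup.closure ((L : Set G) ∪ (R : Set G)) :=
      fun x hx => Subgroup.subset_closure (Or.inr hx)
    rw [eq_top_iff]
    intro g _
    have := biCoset_inv hL hR _ _ (hc.preconnected (Sum.inl (QuotientGroup.mk (1 : G)))
      (Sum.inl (QuotientGroup.mk g)))
    have h2 : (QuotientGroup.mk (1 : G) : G ⧸ Subgroup.closure ((L : Set G) ∪ (R : Set G))) =
      QuotientGroup.mk g := this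
    rw [QuotientGroup.eq] at h2
    simpa using h2
  · have key : ∀ v, (biCosetGraph G L R).Reachable
        (Sum.inl (QuotientGroup.mk (1 : G) : G ⧸ L)) v := by
      have h1 : ∀ g : G, (biCosetGraph G L R).Reachable
          (Sum.inl (QuotientGroup.mk (1 : G) : G ⧸ L)) (Sum.inl (QuotientGroup.mk g)) := by
        intro g
        have := biCoset_reach (L := L) (R := R) g (by rw [hc]; trivial) 1
        rwa [one_mul] at this
      rintro (x | y)
      · obtain ⟨g, rfl⟩ := QuotientGroup.mk_surjective x
        exact h1 g
      · obtain ⟨g, rfl⟩ := QuotientGroup.mk_surjective y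
        exact (h1 g).trans (biCoset_adj_mk g).reachable
    exact (SimpleGraph.connected_iff _).2
      ⟨fun v w => (key v).symm.trans (key w), ⟨Sum.inl (QuotientGroup.mk (1 : G))⟩⟩
  · rcases (biCoset_adj_iff _ _).1 (h (QuotientGroup.mk 1) (QuotientGroup.mk g)) with
      ⟨k, h1, h2⟩ | ⟨k, h1, h2⟩
    · have h1 := QuotientGroup.eq.1 (Sum.inl.inj h1)
      have h2 := QuotientGroup.eq.1 (Sum.inr.inj h2)
      exact ⟨k, by simpa using h1, (g⁻¹ * k)⁻¹, R.inv_mem h2, by group⟩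
    · cases h1
  · obtain ⟨a, rfl⟩ := QuotientGroup.mk_surjective x
    obtain ⟨b, rfl⟩ := QuotientGroup.mk_surjective y
    obtain ⟨l, hl, r, hr, e⟩ := h (a⁻¹ * b)
    have hb : b = a * l * r := by rw [mul_assoc, ← e]; group
    have := biCoset_adj_mk (L := L) (R := R) (a * l)
    rw [show (QuotientGroup.mk (a * l) : G ⧸ L) = QuotientGroup.mk a from
      QuotientGroup.mk_mul_of_mem a hl] at this
    rwa [hb, show (QuotientGroup.mk (a * l * r) : G ⧸ R) = QuotientGroup.mk (a * l) from
      QuotientGroup.mk_mul_of_mem _ hr]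
end

section
/- Let n ≥ 3 and r ≥ 1, and let Γ be the simple graph on (ZMod (r·n)) ⊕ Unit in which inl k and inl k' are adjacent if and only if k' = k + r or k = k' + r, and inl k is adjacent to the unique vertex inr () for every k ∈ ZMod (r·n). Then Γ is connected, the map g with g(inl k) = inl (k+1) and g(inr ()) = inr () is an automorphism of Γ of order r·n, and the cyclic group generated by g has exactly two orbits on the vertex set and acts freely on the edge set of Γ with exactly two orbits, each of size r·n. -/
/-- The graph `r·C_n + K_{rn,1}` on `ZMod (r*n) ⊕ Unit`: `inl k` is adjacent to `inl k'`
iff `k' = k + r` or `k = k' + r`, and `inl k` is adjacent to `inr ()` for every `k`. -/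
def starCycles (r n : ℕ) : SimpleGraph (ZMod (r * n) ⊕ Unit) :=
  SimpleGraph.fromRel (fun v w =>
    (∃ k : ZMod (r * n), v = Sum.inl k ∧ w = Sum.inl (k + (r : ZMod (r * n)))) ∨
    (∃ k : ZMod (r * n), v = Sum.inl k ∧ w = Sum.inr ()))

def scShift (N : ℕ) (a : ZMod N) : ZMod N ⊕ Unit → ZMod N ⊕ Unit := Sum.map (· + a) id

theorem sc_inl_inl (r n : ℕ) (h : (r : ZMod (r * n)) ≠ 0) (a b : ZMod (r * n)) :
    (starCycles r n).Adj (Sum.inl a) (Sum.inl b) ↔ b = a + r ∨ a = b + r := by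
  simp only [starCycles, SimpleGraph.fromRel_adj]
  constructor
  · rintro ⟨-, (⟨k, h1, h2⟩ | ⟨k, h1, h2⟩) | (⟨k, h1, h2⟩ | ⟨k, h1, h2⟩)⟩ <;> simp_all
  · rintro (rfl | rfl)
    · exact ⟨by simpa using h, Or.inl (Or.inl ⟨a, rfl, rfl⟩)⟩
    · exact ⟨by simpa using h, Or.inr (Or.inl ⟨b, rfl, rfl⟩)⟩

theorem sc_inl_inr (r n : ℕ) (a : ZMod (r * n)) :
    (starCycles r n).Adj (Sum.inl a) (Sum.inr ()) := by
  simp [starCycles, SimpleGraph.fromRel_adj]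

theorem sc_edge (r n : ℕ) (h : (r : ZMod (r * n)) ≠ 0) (e : Sym2 (ZMod (r * n) ⊕ Unit))
    (he : e ∈ (starCycles r n).edgeSet) :
    (∃ a : ZMod (r * n), e = s(Sum.inl a, Sum.inl (a + r))) ∨
    (∃ a : ZMod (r * n), e = s(Sum.inl a, Sum.inr ())) := by
  induction e using Sym2.ind with
  | _ x y =>
    rw [SimpleGraph.mem_edgeSet] at he
    rcases x with a | u <;> rcases y with b | v
    · rcases (sc_inl_inl r n h a b).1 he with rfl | rfl
      · exact Or.inl ⟨a, rfl⟩
      · exact Or.inl ⟨b, Sym2.eq_swap⟩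
    · exact Or.inr ⟨a, rfl⟩
    · exact Or.inr ⟨b, Sym2.eq_swap⟩
    · exact absurd he (SimpleGraph.irrefl _)

theorem sc_inj (r n : ℕ) (h : (r : ZMod (r * n)) ≠ 0) (h2 : (r : ZMod (r * n)) + r ≠ 0)
    (e : Sym2 (ZMod (r * n) ⊕ Unit)) (he : e ∈ (starCycles r n).edgeSet) :
    Function.Injective (fun a => Sym2.map (scShift (r * n) a) e) := by
  intro x y hxy
  rcases sc_edge r n h e he with ⟨a, rfl⟩ | ⟨a, rfl⟩
  · simp only [Sym2.map_mk, scShift, Sum.map_inl, Sym2.eq_iff, Sum.inl.injEq] at hxy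
    rcases hxy with ⟨h1, -⟩ | ⟨h1, h3⟩
    · exact add_left_cancel h1
    · exact absurd (by linear_combination h3 - h1) h2
  · simpa [scShift, Sym2.eq_iff] using hxy

def scEquiv (N : ℕ) : ZMod N ⊕ Unit ≃ ZMod N ⊕ Unit :=
  Equiv.sumCongr (Equiv.addRight 1) (Equiv.refl _)

def scIso (r n : ℕ) (h : (r : ZMod (r * n)) ≠ 0) : starCycles r n ≃g starCycles r n where
  toEquiv := scEquiv (r * n)
  map_rel_iff' := by
    rintro (a | u) (b | v)
    · simp only [scEquiv, Equiv.sumCongr_apply, Sum.map_inl, sc_inl_inl r n h, Equiv.coe_addRight]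
      rw [add_right_comm a, add_right_comm b, add_left_inj, add_left_inj]
    · exact iff_of_true (sc_inl_inr r n _) (sc_inl_inr r n _)
    · exact iff_of_true (sc_inl_inr r n _).symm (sc_inl_inr r n _).symm
    · exact iff_of_false (SimpleGraph.irrefl _) (SimpleGraph.irrefl _)

theorem scIso_coe (r n : ℕ) (h : (r : ZMod (r * n)) ≠ 0) :
    ⇑(scIso r n h) = scShift (r * n) 1 := by
  funext x; rcases x with a | u <;> rfl

theorem scShift_comp (N : ℕ) (a b : ZMod N) (x) :
    scShift N a (scShift N b x) = scShift N (b + a) x := by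
  rcases x with c | u <;> simp [scShift, add_assoc]

theorem scIso_pow (r n : ℕ) (h : (r : ZMod (r * n)) ≠ 0) (k : ℕ) :
    ⇑(scIso r n h ^ k) = scShift (r * n) k := by
  induction k with
  | zero => funext x; rcases x with a | u <;> simp [scShift]
  | succ k ih =>
    funext x
    rw [pow_succ', RelIso.mul_apply, ih, scIso_coe, scShift_comp]; simp

theorem scIso_zpow (r n : ℕ) (h : (r : ZMod (r * n)) ≠ 0) (k : ℤ) :
    ⇑(scIso r n h ^ k) = scShift (r * n) k := by
  rcases Int.eq_nat_or_neg k with ⟨m, rfl | rfl⟩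
  · rw [zpow_natCast, scIso_pow]; simp
  · funext x
    apply (scIso r n h ^ m).injective
    rw [zpow_neg, zpow_natCast, RelIso.apply_inv_self, scIso_pow, scShift_comp]
    rcases x with a | u <;> simp [scShift]

theorem scIso_zpow_eq_one (r n : ℕ) (h : (r : ZMod (r * n)) ≠ 0) (k : ℤ) :
    scIso r n h ^ k = 1 ↔ (k : ZMod (r * n)) = 0 := by
  constructor
  · intro hk
    have := congrArg (fun f : starCycles r n ≃g starCycles r n => f (Sum.inl 0)) hk
    simpa [scIso_zpow, scShift] using this
  · intro hk
    ext x
    rw [scIso_zpow, hk]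
    rcases x with a | u <;> simp [scShift]

theorem stmt14 (n r : ℕ) (hn : 3 ≤ n) (hr : 1 ≤ r) :
    (starCycles r n).Connected ∧
    (∃ g : starCycles r n ≃g starCycles r n,
      (∀ k : ZMod (r * n), g (Sum.inl k) = Sum.inl (k + 1)) ∧
      g (Sum.inr ()) = Sum.inr () ∧
      orderOf g = r * n ∧
      -- exactly two orbits on the vertex set
      (∃ v₁ v₂ : ZMod (r * n) ⊕ Unit, ¬ (∃ k : ℤ, (g ^ k) v₁ = v₂) ∧
        ∀ v : ZMod (r * n) ⊕ Unit,
          (∃ k : ℤ, (g ^ k) v₁ = v) ∨ (∃ k : ℤ, (g ^ k) v₂ = v)) ∧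
      -- `⟨g⟩` acts freely on the edge set
      (∀ k : ℤ, ∀ e ∈ (starCycles r n).edgeSet, Sym2.map ⇑(g ^ k) e = e → g ^ k = 1) ∧
      -- with exactly two orbits
      (∃ e₁ ∈ (starCycles r n).edgeSet, ∃ e₂ ∈ (starCycles r n).edgeSet,
        ¬ (∃ k : ℤ, Sym2.map ⇑(g ^ k) e₁ = e₂) ∧
        ∀ e ∈ (starCycles r n).edgeSet,
          (∃ k : ℤ, Sym2.map ⇑(g ^ k) e₁ = e) ∨ (∃ k : ℤ, Sym2.map ⇑(g ^ k) e₂ = e)) ∧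
      -- each edge orbit has size `r * n`
      (∀ e ∈ (starCycles r n).edgeSet,
        {e' : Sym2 (ZMod (r * n) ⊕ Unit) | ∃ k : ℤ, Sym2.map ⇑(g ^ k) e = e'}.ncard = r * n)) := by
  have hlt : ∀ m : ℕ, 0 < m → m < r * n → (m : ZMod (r * n)) ≠ 0 := by
    intro m h0 h1 h2
    rw [ZMod.natCast_eq_zero_iff] at h2
    exact absurd (Nat.le_of_dvd h0 h2) (by omega)
  have h : (r : ZMod (r * n)) ≠ 0 := hlt r (by omega) (by nlinarith)
  have h2 : (r : ZMod (r * n)) + r ≠ 0 := by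
    have := hlt (r + r) (by omega) (by nlinarith)
    simpa using this
  refine ⟨?_, scIso r n h, fun k => rfl, rfl, ?_, ?_, ?_, ?_, ?_⟩
  · rw [SimpleGraph.connected_iff_exists_forall_reachable]
    refine ⟨Sum.inr (), ?_⟩
    rintro (a | u)
    · exact (sc_inl_inr r n a).symm.reachable
    · exact SimpleGraph.Reachable.refl _
  · apply Nat.dvd_right_iff_eq.1
    intro m
    rw [orderOf_dvd_iff_pow_eq_one, ← zpow_natCast, scIso_zpow_eq_one, Int.cast_natCast,
      ZMod.natCast_eq_zero_iff]
  · refine ⟨Sum.inl 0, Sum.inr (), ?_, ?_⟩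
    · rintro ⟨k, hk⟩
      simp [scIso_zpow, scShift] at hk
    · rintro (a | u)
      · obtain ⟨k, rfl⟩ := ZMod.intCast_surjective a
        exact Or.inl ⟨k, by simp [scIso_zpow, scShift]⟩
      · exact Or.inr ⟨0, rfl⟩
  · intro k e he hk
    rw [scIso_zpow_eq_one]
    apply sc_inj r n h h2 e he
    have h0 : scShift (r * n) 0 = id := by
      funext x; rcases x with a | u <;> simp [scShift]
    simp only [h0, Sym2.map_id', id_eq]
    rwa [scIso_zpow] at hk
  · refine ⟨s(Sum.inl 0, Sum.inl (0 + (r : ZMod (r * n)))), ?_, s(Sum.inl 0, Sum.inr ()), ?_, ?_, ?_⟩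
    · rw [SimpleGraph.mem_edgeSet, sc_inl_inl r n h]; exact Or.inl rfl
    · exact sc_inl_inr r n 0
    · rintro ⟨k, hk⟩
      simp [scIso_zpow, scShift] at hk
    · intro e he
      rcases sc_edge r n h e he with ⟨a, rfl⟩ | ⟨a, rfl⟩
      · obtain ⟨k, rfl⟩ := ZMod.intCast_surjective a
        exact Or.inl ⟨k, by simp [scIso_zpow, scShift, add_comm]⟩
      · obtain ⟨k, rfl⟩ := ZMod.intCast_surjective a
        exact Or.inr ⟨k, by simp [scIso_zpow, scShift]⟩
  · intro e he
    have hs : {e' : Sym2 (ZMod (r * n) ⊕ Unit) |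
        ∃ k : ℤ, Sym2.map ⇑(scIso r n h ^ k) e = e'} =
        Set.range (fun a => Sym2.map (scShift (r * n) a) e) := by
      ext e'
      simp only [Set.mem_ofPred_eq, Set.mem_range, scIso_zpow]
      constructor
      · rintro ⟨k, hk⟩; exact ⟨k, hk⟩
      · rintro ⟨a, ha⟩
        obtain ⟨k, rfl⟩ := ZMod.intCast_surjective a
        exact ⟨k, ha⟩
    rw [hs, ← Set.image_univ, Set.ncard_image_of_injective _ (sc_inj r n h h2 e he),
      Set.ncard_univ, Nat.card_zmod]
end

section
/- Let s, r, r' ≥ 1 with Nat.gcd r r' = 1, and let Γ be the simple graph on (ZMod r) ⊕ (ZMod (s·r·r')) ⊕ (ZMod r') in which a vertex i in the first summand is adjacent to a vertex v in the second summand if and only if the image of v under the natural ring homomorphism ZMod (s·r·r') → ZMod r equals i, a vertex i' in the third summand is adjacent to a vertex v in the second summand if and only if the image of v under the natural ring homomorphism ZMod (s·r·r') → ZMod r' equals i', and there are no other adjacencies. Then Γ is connected, the map g adding 1 in each summand is an automorphism of Γ of order s·r·r', and the cyclic group generated by g has exactly three orbits on the vertex set (the three summands) and acts freely on the edge set of Γ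 with exactly two orbits, each of size s·r·r'. -/
/-- The graph `r·(K_{sr',1}-stars) + r'·(K_{sr,1}-stars)` on
`ZMod r ⊕ ZMod (s*r*r') ⊕ ZMod r'`: a vertex `i` of the first summand is adjacent to a
vertex `v` of the second summand iff `v ≡ i (mod r)`, and a vertex `i'` of the third
summand is adjacent to `v` iff `v ≡ i' (mod r')`; there are no other adjacencies. -/
def triOrbitGraph (s r r' : ℕ) : SimpleGraph (ZMod r ⊕ ZMod (s * r * r') ⊕ ZMod r') :=
  SimpleGraph.fromRel (fun x y =>
    (∃ (i : ZMod r) (v : ZMod (s * r * r')),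
      x = Sum.inl i ∧ y = Sum.inr (Sum.inl v) ∧
        ZMod.castHom (⟨s * r', by ring⟩ : r ∣ s * r * r') (ZMod r) v = i) ∨
    (∃ (i' : ZMod r') (v : ZMod (s * r * r')),
      x = Sum.inr (Sum.inr i') ∧ y = Sum.inr (Sum.inl v) ∧
        ZMod.castHom (⟨s * r, by ring⟩ : r' ∣ s * r * r') (ZMod r') v = i'))

namespace TriAux

variable {s r r' : ℕ}

abbrev c1 (s r r' : ℕ) : ZMod (s * r * r') →+* ZMod r :=
  ZMod.castHom (⟨s * r', by ring⟩ : r ∣ s * r * r') (ZMod r)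

abbrev c2 (s r r' : ℕ) : ZMod (s * r * r') →+* ZMod r' :=
  ZMod.castHom (⟨s * r, by ring⟩ : r' ∣ s * r * r') (ZMod r')

abbrev V (s r r' : ℕ) := ZMod r ⊕ ZMod (s * r * r') ⊕ ZMod r'

def E1 (v : ZMod (s * r * r')) : Sym2 (V s r r') :=
  s(Sum.inl (c1 s r r' v), Sum.inr (Sum.inl v))

def E2 (v : ZMod (s * r * r')) : Sym2 (V s r r') :=
  s(Sum.inr (Sum.inr (c2 s r r' v)), Sum.inr (Sum.inl v))

lemma adj1 (v : ZMod (s * r * r')) :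
    (triOrbitGraph s r r').Adj (Sum.inl (c1 s r r' v)) (Sum.inr (Sum.inl v)) := by
  rw [triOrbitGraph, SimpleGraph.fromRel_adj]
  exact ⟨by simp, Or.inl (Or.inl ⟨_, _, rfl, rfl, rfl⟩)⟩

lemma adj2 (v : ZMod (s * r * r')) :
    (triOrbitGraph s r r').Adj (Sum.inr (Sum.inr (c2 s r r' v))) (Sum.inr (Sum.inl v)) := by
  rw [triOrbitGraph, SimpleGraph.fromRel_adj]
  exact ⟨by simp, Or.inl (Or.inr ⟨_, _, rfl, rfl, rfl⟩)⟩

lemma mem_edge (e : Sym2 (V s r r')) :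
    e ∈ (triOrbitGraph s r r').edgeSet ↔ (∃ v, E1 v = e) ∨ (∃ v, E2 v = e) := by
  constructor
  · induction e using Sym2.ind with
    | _ x y =>
      rw [SimpleGraph.mem_edgeSet, triOrbitGraph, SimpleGraph.fromRel_adj]
      rintro ⟨-, (⟨i, v, rfl, rfl, h⟩ | ⟨i, v, rfl, rfl, h⟩) |
        (⟨i, v, rfl, rfl, h⟩ | ⟨i, v, rfl, rfl, h⟩)⟩
      · exact Or.inl ⟨v, by rw [← h]; rfl⟩
      · exact Or.inr ⟨v, by rw [← h]; rfl⟩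
      · exact Or.inl ⟨v, by rw [← h]; exact Sym2.eq_swap⟩
      · exact Or.inr ⟨v, by rw [← h]; exact Sym2.eq_swap⟩
  · rintro (⟨v, rfl⟩ | ⟨v, rfl⟩)
    · exact adj1 v
    · exact adj2 v

def f (s r r' : ℕ) : V s r r' ≃ V s r r' :=
  Equiv.sumCongr (Equiv.addRight 1) (Equiv.sumCongr (Equiv.addRight 1) (Equiv.addRight 1))

lemma map_adj (x y : V s r r') :
    (triOrbitGraph s r r').Adj (f s r r' x) (f s r r' y) ↔ (triOrbitGraph s r r').Adj x y := by
  rcases x with x | x | x <;> rcases y with y | y | y <;>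
    simp [triOrbitGraph, SimpleGraph.fromRel_adj, f, ← ZMod.castHom_apply, map_add, map_one,
      -ZMod.castHom_apply]

def g (s r r' : ℕ) : triOrbitGraph s r r' ≃g triOrbitGraph s r r' :=
  ⟨f s r r', fun {x y} => map_adj x y⟩

lemma g0 (i : ZMod r) : g s r r' (Sum.inl i) = Sum.inl (i + 1) := rfl
lemma g1 (i : ZMod (s * r * r')) :
    g s r r' (Sum.inr (Sum.inl i)) = Sum.inr (Sum.inl (i + 1)) := rfl
lemma g2 (i : ZMod r') : g s r r' (Sum.inr (Sum.inr i)) = Sum.inr (Sum.inr (i + 1)) := rfl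

def tr (s r r' : ℕ) (k : ℤ) : V s r r' → V s r r' :=
  Sum.map (· + (k : ZMod r)) (Sum.map (· + (k : ZMod (s * r * r'))) (· + (k : ZMod r')))

lemma gpow (k : ℤ) (x : V s r r') : (g s r r' ^ k) x = tr s r r' k x := by
  induction k generalizing x with
  | zero => rcases x with x | x | x <;> simp [tr]
  | succ n ih =>
    rw [zpow_add_one, RelIso.mul_apply, ih]
    rcases x with x | x | x <;> simp [tr, g0, g1, g2] <;> ring
  | pred n ih =>
    obtain ⟨y, rfl⟩ := (g s r r').surjective x
    rw [zpow_sub_one, RelIso.mul_apply, RelIso.inv_apply_self, ih]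
    rcases y with x | x | x <;> simp [tr, g0, g1, g2] <;> ring

lemma mapE1 (k : ℤ) (v : ZMod (s * r * r')) :
    Sym2.map ⇑(g s r r' ^ k) (E1 v) = E1 (v + (k : ZMod (s * r * r'))) := by
  simp only [E1, Sym2.map_mk, gpow, tr, Sum.map_inl, Sum.map_inr, map_add, map_intCast]

lemma mapE2 (k : ℤ) (v : ZMod (s * r * r')) :
    Sym2.map ⇑(g s r r' ^ k) (E2 v) = E2 (v + (k : ZMod (s * r * r'))) := by
  simp only [E2, Sym2.map_mk, gpow, tr, Sum.map_inl, Sum.map_inr, map_add, map_intCast]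

lemma E1_inj : Function.Injective (E1 : ZMod (s * r * r') → _) := by
  intro v w h
  simp [E1] at h
  exact h.2

lemma E2_inj : Function.Injective (E2 : ZMod (s * r * r') → _) := by
  intro v w h
  simp [E2] at h
  exact h.2

lemma E12 (v w : ZMod (s * r * r')) : E1 v ≠ E2 w := by
  simp [E1, E2]

lemma gpow_one (k : ℤ) : g s r r' ^ k = 1 ↔ (k : ZMod (s * r * r')) = 0 := by
  constructor
  · intro h
    have := gpow k (Sum.inr (Sum.inl 0) : V s r r')
    rw [h] at this
    simpa [tr] using this.symm
  · intro h
    have h1 : (k : ZMod r) = 0 := by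
      rw [← map_intCast (c1 s r r') k, h, map_zero]
    have h2 : (k : ZMod r') = 0 := by
      rw [← map_intCast (c2 s r r') k, h, map_zero]
    ext x
    rw [gpow]
    rcases x with x | x | x <;> simp [tr, h, h1, h2]

lemma exists_int (n : ℕ) (a b : ZMod n) : ∃ k : ℤ, a + k = b := by
  obtain ⟨k, hk⟩ := ZMod.intCast_surjective (b - a)
  exact ⟨k, by rw [hk]; ring⟩

lemma crt (hgcd : Nat.gcd r r' = 1) (i : ZMod r) (j : ZMod r') :
    ∃ v : ZMod (s * r * r'), c1 s r r' v = i ∧ c2 s r r' v = j := by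
  obtain ⟨a, rfl⟩ := ZMod.intCast_surjective i
  obtain ⟨b, rfl⟩ := ZMod.intCast_surjective j
  have hb := Int.gcd_eq_gcd_ab r r'
  rw [Int.gcd_natCast_natCast, hgcd] at hb
  set x := Int.gcdA r r'
  set y := Int.gcdB r r'
  refine ⟨((a * (r' * y) + b * (r * x) : ℤ) : ZMod (s * r * r')), ?_, ?_⟩
  · rw [map_intCast]
    have := congrArg (Int.cast : ℤ → ZMod r) hb
    push_cast at this ⊢
    simp at this ⊢
    rw [← this, mul_one]
  · rw [map_intCast]
    have := congrArg (Int.cast : ℤ → ZMod r') hb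
    push_cast at this ⊢
    simp at this ⊢
    rw [← this, mul_one]

lemma conn (hgcd : Nat.gcd r r' = 1) : (triOrbitGraph s r r').Connected := by
  have h1 : ∀ i j, (triOrbitGraph s r r').Reachable (Sum.inl i) (Sum.inr (Sum.inr j)) := by
    intro i j
    obtain ⟨v, rfl, rfl⟩ := crt (s := s) hgcd i j
    exact (adj1 v).reachable.trans (adj2 v).reachable.symm
  have h2 : ∀ x, (triOrbitGraph s r r').Reachable x (Sum.inl 0) := by
    rintro (i | v | j)
    · exact (h1 i 0).trans (h1 0 0).symm
    · exact ((adj1 v).reachable.symm.trans (h1 _ 0)).trans (h1 0 0).symm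
    · exact (h1 0 j).symm
  haveI : Nonempty (V s r r') := ⟨Sum.inl 0⟩
  exact ⟨fun x y => (h2 x).trans (h2 y).symm⟩

end TriAux

theorem stmt15 (s r r' : ℕ) (hs : 1 ≤ s) (hr : 1 ≤ r) (hr' : 1 ≤ r')
    (hgcd : Nat.gcd r r' = 1) :
    (triOrbitGraph s r r').Connected ∧
    (∃ g : triOrbitGraph s r r' ≃g triOrbitGraph s r r',
      (∀ i : ZMod r, g (Sum.inl i) = Sum.inl (i + 1)) ∧
      (∀ v : ZMod (s * r * r'), g (Sum.inr (Sum.inl v)) = Sum.inr (Sum.inl (v + 1))) ∧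
      (∀ i' : ZMod r', g (Sum.inr (Sum.inr i')) = Sum.inr (Sum.inr (i' + 1))) ∧
      orderOf g = s * r * r' ∧
      -- the vertex orbits of `⟨g⟩` are exactly the three summands
      (∀ i : ZMod r,
        {w : ZMod r ⊕ ZMod (s * r * r') ⊕ ZMod r' | ∃ k : ℤ, (g ^ k) (Sum.inl i) = w} =
          Set.range Sum.inl) ∧
      (∀ v : ZMod (s * r * r'),
        {w : ZMod r ⊕ ZMod (s * r * r') ⊕ ZMod r' | ∃ k : ℤ, (g ^ k) (Sum.inr (Sum.inl v)) = w} =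
          Set.range (Sum.inr ∘ Sum.inl)) ∧
      (∀ i' : ZMod r',
        {w : ZMod r ⊕ ZMod (s * r * r') ⊕ ZMod r' | ∃ k : ℤ, (g ^ k) (Sum.inr (Sum.inr i')) = w} =
          Set.range (Sum.inr ∘ Sum.inr)) ∧
      -- `⟨g⟩` acts freely on the edge set
      (∀ k : ℤ, ∀ e ∈ (triOrbitGraph s r r').edgeSet, Sym2.map ⇑(g ^ k) e = e → g ^ k = 1) ∧
      -- with exactly two orbits
      (∃ e₁ ∈ (triOrbitGraph s r r').edgeSet, ∃ e₂ ∈ (triOrbitGraph s r r').edgeSet,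
        ¬ (∃ k : ℤ, Sym2.map ⇑(g ^ k) e₁ = e₂) ∧
        ∀ e ∈ (triOrbitGraph s r r').edgeSet,
          (∃ k : ℤ, Sym2.map ⇑(g ^ k) e₁ = e) ∨ (∃ k : ℤ, Sym2.map ⇑(g ^ k) e₂ = e)) ∧
      -- each edge orbit has size `s * r * r'`
      (∀ e ∈ (triOrbitGraph s r r').edgeSet,
        {e' : Sym2 (ZMod r ⊕ ZMod (s * r * r') ⊕ ZMod r') |
          ∃ k : ℤ, Sym2.map ⇑(g ^ k) e = e'}.ncard = s * r * r')) := by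
  refine ⟨TriAux.conn hgcd, TriAux.g s r r', fun _ => rfl, fun _ => rfl, fun _ => rfl,
    ?_, ?_, ?_, ?_, ?_, ?_, ?_⟩
  · have key : ∀ n : ℕ, orderOf (TriAux.g s r r') ∣ n ↔ s * r * r' ∣ n := by
      intro n
      rw [orderOf_dvd_iff_pow_eq_one, ← zpow_natCast, TriAux.gpow_one, Int.cast_natCast,
        ZMod.natCast_eq_zero_iff]
    exact Nat.dvd_antisymm ((key _).2 dvd_rfl) ((key _).1 dvd_rfl)
  · intro i
    ext w
    simp only [TriAux.gpow, TriAux.tr, Set.mem_ofPred_eq, Set.mem_range, Sum.map_inl]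
    constructor
    · rintro ⟨k, rfl⟩
      exact ⟨_, rfl⟩
    · rintro ⟨j, rfl⟩
      obtain ⟨k, hk⟩ := TriAux.exists_int _ i j
      exact ⟨k, by rw [hk]⟩
  · intro i
    ext w
    simp only [TriAux.gpow, TriAux.tr, Set.mem_ofPred_eq, Set.mem_range, Sum.map_inl, Sum.map_inr]
    constructor
    · rintro ⟨k, rfl⟩
      exact ⟨_, rfl⟩
    · rintro ⟨j, rfl⟩
      obtain ⟨k, hk⟩ := TriAux.exists_int _ i j
      exact ⟨k, by rw [hk]; rfl⟩
  · intro i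
    ext w
    simp only [TriAux.gpow, TriAux.tr, Set.mem_ofPred_eq, Set.mem_range, Sum.map_inr]
    constructor
    · rintro ⟨k, rfl⟩
      exact ⟨_, rfl⟩
    · rintro ⟨j, rfl⟩
      obtain ⟨k, hk⟩ := TriAux.exists_int _ i j
      exact ⟨k, by rw [hk]; rfl⟩
  · intro k e he h
    rw [TriAux.gpow_one]
    rcases (TriAux.mem_edge e).1 he with ⟨v, rfl⟩ | ⟨v, rfl⟩
    · rw [TriAux.mapE1] at h
      simpa using TriAux.E1_inj h
    · rw [TriAux.mapE2] at h
      simpa using TriAux.E2_inj h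
  · refine ⟨TriAux.E1 0, (TriAux.mem_edge _).2 (Or.inl ⟨_, rfl⟩), TriAux.E2 0,
      (TriAux.mem_edge _).2 (Or.inr ⟨_, rfl⟩), ?_, ?_⟩
    · rintro ⟨k, hk⟩
      rw [TriAux.mapE1] at hk
      exact TriAux.E12 _ _ hk
    · intro e he
      rcases (TriAux.mem_edge e).1 he with ⟨v, rfl⟩ | ⟨v, rfl⟩
      · obtain ⟨k, hk⟩ := TriAux.exists_int _ 0 v
        exact Or.inl ⟨k, by rw [TriAux.mapE1, hk]⟩
      · obtain ⟨k, hk⟩ := TriAux.exists_int _ 0 v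
        exact Or.inr ⟨k, by rw [TriAux.mapE2, hk]⟩
  · intro e he
    rcases (TriAux.mem_edge e).1 he with ⟨v, rfl⟩ | ⟨v, rfl⟩
    · have : {e' | ∃ k : ℤ, Sym2.map ⇑(TriAux.g s r r' ^ k) (TriAux.E1 v) = e'} =
          TriAux.E1 '' Set.univ := by
        ext e'
        simp only [TriAux.mapE1, Set.mem_ofPred_eq, Set.image_univ, Set.mem_range]
        constructor
        · rintro ⟨k, rfl⟩
          exact ⟨_, rfl⟩
        · rintro ⟨j, rfl⟩
          obtain ⟨k, hk⟩ := TriAux.exists_int _ v j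
          exact ⟨k, by rw [hk]⟩
      rw [this, Set.ncard_image_of_injective _ TriAux.E1_inj, Set.ncard_univ, Nat.card_zmod]
    · have : {e' | ∃ k : ℤ, Sym2.map ⇑(TriAux.g s r r' ^ k) (TriAux.E2 v) = e'} =
          TriAux.E2 '' Set.univ := by
        ext e'
        simp only [TriAux.mapE2, Set.mem_ofPred_eq, Set.image_univ, Set.mem_range]
        constructor
        · rintro ⟨k, rfl⟩
          exact ⟨_, rfl⟩
        · rintro ⟨j, rfl⟩
          obtain ⟨k, hk⟩ := TriAux.exists_int _ v j
          exact ⟨k, by rw [hk]⟩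
      rw [this, Set.ncard_image_of_injective _ TriAux.E2_inj, Set.ncard_univ, Nat.card_zmod]
end
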